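/- arXiv:1810.05069 — 3 statements merged into one kernel-verified Lean document; each statement's English description precedes it below -/
import Mathlib

section
/- Let Ω ⊂ ℂ be a nonempty open set. Then the Cauchy-Riemann operator ∂̄ = (1/2)(∂₁ + i∂₂) : C^∞(Ω, ℂ) → C^∞(Ω, ℂ) is surjective: for every f ∈ C^∞(Ω, ℂ) there exists u ∈ C^∞(Ω, ℂ) with ∂̄u = f on Ω. -/
open Complex

/-- Real partial derivative of `f : ℂ → ℂ` in the direction `v`. -/
noncomputable def pd (v : ℂ) (f : ℂ → ℂ) : ℂ → ℂ := fun z => fderiv ℝ f z v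

/-- The Cauchy-Riemann operator `∂̄ = (1/2)(∂₁ + i ∂₂)`. -/
noncomputable def dbar (f : ℂ → ℂ) : ℂ → ℂ := fun z => (1 / 2 : ℂ) * (pd 1 f z + I * pd I f z)

/-!
For `g` of compact support, the Cauchy transform `C g`, the convolution of `g` with `1 / (π z)`,
satisfies `∂̄ (C g) = g`; by translation and differentiation under the integral this is the identity
`∫ ∂̄h(t) / t dt = -π h(0)`. In polar coordinates the left-hand side becomes the integral of
`(∂_r h + (i / r) ∂_θ h) / 2` with respect to `dr dθ`, where the radial part integrates along each
ray to `-h(0)` and the angular part integrates along each circle to `0`.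

For general `f`, exhaust `Ω` by compact sets `K n` and let `g n` be of compact support and equal to
`f` on `K (n + 1)`. Then `C (g (n + 1)) - C (g n)` is a superposition of kernels `z ↦ (z - w)⁻¹`
with `w ∉ K (n + 1)`. As in Runge's theorem, a geometric series pushes the pole `w` to infinity or
to a point outside `Ω`, so this difference is within `2⁻ⁿ` of a function `p n` holomorphic on `Ω`,
uniformly on `K n`. Hence `C (g n) - ∑ j < n, p j` converges locally uniformly. Since two solutions
differ by a holomorphic function, locally uniform limits of solutions of `∂̄u = f` are solutions as
regular as `f`, by Weierstrass' theorem.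
-/

open MeasureTheory Set Filter Topology Function Metric
open scoped ComplexConjugate ContDiff Convolution Manifold

section Wirtinger

variable {f g : ℂ → ℂ} {z : ℂ}

lemma dbar_sub (hf : DifferentiableAt ℝ f z) (hg : DifferentiableAt ℝ g z) :
    dbar (fun z ↦ f z - g z) z = dbar f z - dbar g z := by
  simp only [dbar, pd, fderiv_fun_sub hf hg, sub_apply]
  ring

lemma dbar_const_mul (c : ℂ) (hf : DifferentiableAt ℝ f z) :
    dbar (fun z ↦ c * f z) z = c * dbar f z := by
  simp only [dbar, pd, fderiv_const_mul hf, smul_apply, smul_eq_mul]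
  ring

lemma dbar_comp_const_sub (w : ℂ) (hf : DifferentiableAt ℝ f (w - z)) :
    dbar (fun z ↦ f (w - z)) z = -dbar f (w - z) := by
  have h : HasFDerivAt (fun z ↦ f (w - z)) _ z :=
    hf.hasFDerivAt.comp z ((hasFDerivAt_id z).const_sub w)
  simp only [dbar, pd, h.fderiv, ContinuousLinearMap.comp_apply, neg_apply,
    ContinuousLinearMap.id_apply, map_neg]
  ring

lemma differentiableAt_complex_iff_dbar_eq_zero :
    DifferentiableAt ℂ f z ↔ DifferentiableAt ℝ f z ∧ dbar f z = 0 := by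
  rw [differentiableAt_complex_iff_differentiableAt_real, smul_eq_mul, dbar, pd, pd]
  refine and_congr_right fun _ ↦ ⟨fun h ↦ ?_, fun h ↦ ?_⟩
  · linear_combination (I / 2) * h + fderiv ℝ f z 1 / 2 * I_mul_I
  · linear_combination (-2 * I) * h + fderiv ℝ f z I * I_mul_I

lemma dbar_sub_of_differentiableAt_complex (hf : DifferentiableAt ℝ f z)
    (hg : DifferentiableAt ℂ g z) : dbar (fun z ↦ f z - g z) z = dbar f z := by
  obtain ⟨hg, hdbar⟩ := differentiableAt_complex_iff_dbar_eq_zero.mp hg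
  rw [dbar_sub hf hg, hdbar, sub_zero]

lemma fderiv_add_I_mul_fderiv_I_mul (f : ℂ → ℂ) (z v : ℂ) :
    fderiv ℝ f z v + I * fderiv ℝ f z (I * v) = 2 * conj v * dbar f z := by
  have fderiv_eq (w : ℂ) : fderiv ℝ f z w = w.re * pd 1 f z + w.im * pd I f z := by
    have hw : w = w.re • (1 : ℂ) + w.im • I := by simp [re_add_im]
    conv_lhs => rw [hw, map_add, map_smul, map_smul, real_smul, real_smul]
    rfl
  have conj_eq : conj v = v.re - v.im * I := by
    simp [Complex.ext_iff]
  rw [fderiv_eq v, fderiv_eq (I * v), conj_eq, I_mul_re, I_mul_im, dbar]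
  push_cast
  linear_combination v.im * pd I f z * I_mul_I

end Wirtinger

section Pompeiu

lemma integral_Ioi_fderiv_smul {E F : Type*} [NormedAddCommGroup E] [NormedSpace ℝ E]
    [NormedAddCommGroup F] [NormedSpace ℝ F] [CompleteSpace F] {h : E → F} (hh : ContDiff ℝ 1 h)
    (hc : HasCompactSupport h) {v : E} (hv : v ≠ 0) :
    ∫ r in Ioi (0 : ℝ), fderiv ℝ h (r • v) v = -h 0 := by
  have hray : HasCompactSupport fun r : ℝ ↦ h (r • v) :=
    hc.comp_isClosedEmbedding (isClosedEmbedding_smul_left hv)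
  have hderiv (r : ℝ) : deriv (fun r : ℝ ↦ h (r • v)) r = fderiv ℝ h (r • v) v := by
    have hv : HasDerivAt (fun r : ℝ ↦ r • v) v r := by
      simpa using (hasDerivAt_id r).smul_const v
    exact ((hh.differentiable one_ne_zero _).hasFDerivAt.comp_hasDerivAt r hv).deriv
  have hsmooth : ContDiff ℝ 1 fun r : ℝ ↦ h (r • v) := hh.comp (by fun_prop)
  have := hray.integral_Ioi_deriv_eq hsmooth 0
  simpa only [hderiv, zero_smul] using this

lemma integral_fderiv_circleMap {F : Type*} [NormedAddCommGroup F] [NormedSpace ℝ F]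
    [CompleteSpace F] {h : ℂ → F} (hh : ContDiff ℝ 1 h) (c : ℂ) (r : ℝ) :
    ∫ θ in -Real.pi..Real.pi, fderiv ℝ h (circleMap c r θ) (circleMap 0 r θ * I) = 0 := by
  have hderiv (θ : ℝ) : HasDerivAt (fun θ ↦ h (circleMap c r θ))
      (fderiv ℝ h (circleMap c r θ) (circleMap 0 r θ * I)) θ :=
    (hh.differentiable one_ne_zero _).hasFDerivAt.comp_hasDerivAt θ (hasDerivAt_circleMap c r θ)
  have hcont : Continuous fun θ ↦ fderiv ℝ h (circleMap c r θ) (circleMap 0 r θ * I) :=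
    ((hh.continuous_fderiv one_ne_zero).comp (continuous_circleMap c r)).clm_apply
      ((continuous_circleMap 0 r).mul continuous_const)
  rw [intervalIntegral.integral_eq_sub_of_hasDerivAt (fun θ _ ↦ hderiv θ)
    (hcont.intervalIntegrable _ _), sub_eq_zero, ← periodic_circleMap c r (-Real.pi)]
  ring_nf

lemma integrableOn_polarCoord_target_of_continuous {E : Type*} [NormedAddCommGroup E]
    {F : ℝ × ℝ → E} (hF : Continuous F) {R : ℝ} (hR : ∀ r θ, R ≤ r → F (r, θ) = 0) :
    IntegrableOn F polarCoord.target := by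
  have hcompact : IsCompact (Icc 0 R ×ˢ Icc (-Real.pi) Real.pi) := isCompact_Icc.prod isCompact_Icc
  refine (hF.continuousOn.integrableOn_compact hcompact).of_forall_sdiff_eq_zero
    polarCoord.open_target.measurableSet ?_
  rintro ⟨r, θ⟩ ⟨⟨hr, hθ⟩, hout⟩
  exact hR r θ (le_of_not_ge fun hrR ↦ hout ⟨⟨hr.le, hrR⟩, Ioo_subset_Icc_self hθ⟩)

variable {h : ℂ → ℂ}

lemma integrableOn_polarCoord_fderiv (hh : ContDiff ℝ 1 h) (hc : HasCompactSupport h)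
    (c : ℂ) : IntegrableOn (fun p : ℝ × ℝ ↦ fderiv ℝ h (circleMap 0 p.1 p.2) (c * exp (p.2 * I)))
      polarCoord.target := by
  obtain ⟨R, -, hzero⟩ := (hc.fderiv ℝ).exists_pos_le_norm
  refine integrableOn_polarCoord_target_of_continuous (R := R) ?_ fun r θ hr ↦ ?_
  · have := hh.continuous_fderiv one_ne_zero
    simp only [circleMap_zero]
    fun_prop
  · rw [hzero _ (by rw [norm_circleMap_zero]; exact hr.trans (le_abs_self r)), zero_apply]

lemma integral_polarCoord_fderiv_radial (hh : ContDiff ℝ 1 h) (hc : HasCompactSupport h) :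
    ∫ p in polarCoord.target, fderiv ℝ h (circleMap 0 p.1 p.2) (exp (p.2 * I))
      = -(2 * Real.pi * h 0) := by
  have hint := integrableOn_polarCoord_fderiv hh hc 1
  simp only [one_mul] at hint
  have hray (θ : ℝ) :
      ∫ r in Ioi (0 : ℝ), fderiv ℝ h (circleMap 0 r θ) (exp (θ * I)) = -h 0 := by
    simpa only [circleMap_zero, real_smul] using
      integral_Ioi_fderiv_smul hh hc (exp_ne_zero (θ * I))
  rw [IntegrableOn] at hint
  rw [polarCoord_target, Measure.volume_eq_prod, ← Measure.prod_restrict] at hint ⊢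
  rw [integral_prod_symm _ hint]
  simp only [hray, integral_const, measureReal_restrict_apply_univ,
    Real.volume_real_Ioo_of_le (neg_le_self Real.pi_pos.le), real_smul]
  push_cast
  ring

lemma integral_polarCoord_fderiv_angular (hh : ContDiff ℝ 1 h) (hc : HasCompactSupport h) :
    ∫ p in polarCoord.target, fderiv ℝ h (circleMap 0 p.1 p.2) (I * exp (p.2 * I)) = 0 := by
  have hint := integrableOn_polarCoord_fderiv hh hc I
  have hcircle (r : ℝ) (hr : 0 < r) : ∫ θ in Ioo (-Real.pi) Real.pi,
      fderiv ℝ h (circleMap 0 r θ) (I * exp (θ * I)) = 0 := by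
    have hscale (θ : ℝ) : fderiv ℝ h (circleMap 0 r θ) (circleMap 0 r θ * I)
        = r • fderiv ℝ h (circleMap 0 r θ) (I * exp (θ * I)) := by
      rw [← map_smul, real_smul, circleMap_zero, mul_assoc, mul_comm I]
    have := integral_fderiv_circleMap hh 0 r
    simp only [hscale, intervalIntegral.integral_smul] at this
    rw [← integral_Ioc_eq_integral_Ioo,
      ← intervalIntegral.integral_of_le (neg_le_self Real.pi_pos.le)]
    exact (smul_eq_zero.mp this).resolve_left hr.ne'
  rw [polarCoord_target, Measure.volume_eq_prod] at hint ⊢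
  rw [setIntegral_prod _ hint]
  exact setIntegral_eq_zero_of_forall_eq_zero hcircle

lemma integral_inv_mul_dbar (hh : ContDiff ℝ 1 h) (hc : HasCompactSupport h) :
    ∫ t, t⁻¹ * dbar h t = -(Real.pi * h 0) := by
  -- `∂̄ = (e^{iθ} / 2) (∂_r + (i / r) ∂_θ)`, so the Jacobian `r` cancels `1 / |t|`.
  have hpolar : ∀ p ∈ polarCoord.target,
      p.1 • ((Complex.polarCoord.symm p)⁻¹ * dbar h (Complex.polarCoord.symm p))
        = 1 / 2 * (fderiv ℝ h (circleMap 0 p.1 p.2) (1 * exp (p.2 * I))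
          + I * fderiv ℝ h (circleMap 0 p.1 p.2) (I * exp (p.2 * I))) := by
    rintro ⟨r, θ⟩ ⟨hr, -⟩
    have hr : (r : ℂ) ≠ 0 := ofReal_ne_zero.mpr (ne_of_gt hr)
    have hsymm : Complex.polarCoord.symm (r, θ) = circleMap 0 r θ := by
      simp [circleMap_zero, exp_mul_I]
    have hconj : conj (exp (θ * I)) = (exp (θ * I))⁻¹ := by
      rw [← exp_conj, ← exp_neg]
      simp
    rw [hsymm, one_mul, fderiv_add_I_mul_fderiv_I_mul, hconj, real_smul, circleMap_zero]
    field_simp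
  rw [← Complex.integral_comp_polarCoord_symm,
    setIntegral_congr_fun polarCoord.open_target.measurableSet hpolar, integral_const_mul,
    integral_add (integrableOn_polarCoord_fderiv hh hc 1)
      ((integrableOn_polarCoord_fderiv hh hc I).const_mul I), integral_const_mul,
    integral_polarCoord_fderiv_angular hh hc]
  simp only [one_mul, integral_polarCoord_fderiv_radial hh hc]
  ring

end Pompeiu

section CauchyTransform

lemma pd_convolution_right {f g : ℂ → ℂ} (hf : LocallyIntegrable f) (hg : ContDiff ℝ 1 g)
    (hc : HasCompactSupport g) (v : ℂ) :
    pd v (f ⋆[ContinuousLinearMap.mul ℝ ℂ] g) = f ⋆[ContinuousLinearMap.mul ℝ ℂ] pd v g := by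
  ext z
  rw [pd, (hc.hasFDerivAt_convolution_right _ hf hg z).fderiv, convolution_precompR_apply _ hf
    (hc.fderiv ℝ) (hg.continuous_fderiv one_ne_zero)]
  rfl

lemma dbar_convolution_right {f g : ℂ → ℂ} (hf : LocallyIntegrable f) (hg : ContDiff ℝ 1 g)
    (hc : HasCompactSupport g) :
    dbar (f ⋆[ContinuousLinearMap.mul ℝ ℂ] g) = f ⋆[ContinuousLinearMap.mul ℝ ℂ] dbar g := by
  have hexists (v : ℂ) : ConvolutionExists f (pd v g) (ContinuousLinearMap.mul ℝ ℂ) volume :=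
    (hc.fderiv_apply ℝ v).convolutionExists_right _ hf
      ((hg.continuous_fderiv one_ne_zero).clm_apply continuous_const)
  ext z
  simp only [dbar, pd_convolution_right hf hg hc, convolution_def]
  rw [← integral_const_mul, ← integral_add (hexists 1 z) ((hexists I z).const_mul I),
    ← integral_const_mul]
  refine integral_congr_ae (.of_forall fun t ↦ ?_)
  simp only [ContinuousLinearMap.mul_apply']
  ring

lemma locallyIntegrable_inv : LocallyIntegrable fun z : ℂ ↦ z⁻¹ :=
  locallyIntegrable_of_norm_le_rpow (C := 1) (α := 1) (by simp) (by simp)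
    (.of_forall fun z ↦ by simp [Real.rpow_neg_one]) measurable_inv.aestronglyMeasurable

/-- The Cauchy transform `z ↦ π⁻¹ ∫ g(w) / (z - w) dw`, where `dw` is planar Lebesgue measure: the
convolution of `g` with the fundamental solution `1 / (π z)` of `∂̄`. -/
noncomputable def cauchyTransform (g : ℂ → ℂ) (z : ℂ) : ℂ :=
  (Real.pi : ℂ)⁻¹ * ∫ w, (z - w)⁻¹ * g w

variable {g g' : ℂ → ℂ}

lemma cauchyTransform_eq_convolution (g : ℂ → ℂ) :
    cauchyTransform g = fun z ↦
      (Real.pi : ℂ)⁻¹ * ((fun w ↦ w⁻¹) ⋆[ContinuousLinearMap.mul ℝ ℂ] g) z := by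
  ext z
  rw [convolution_eq_swap]
  rfl

lemma integrable_inv_sub_mul (hg : Continuous g) (hc : HasCompactSupport g) (z : ℂ) :
    Integrable fun w ↦ (z - w)⁻¹ * g w :=
  (hc.convolutionExists_right (ContinuousLinearMap.mul ℝ ℂ) locallyIntegrable_inv hg
    z).integrable_swap

lemma cauchyTransform_sub (hg : Continuous g) (hc : HasCompactSupport g) (hg' : Continuous g')
    (hc' : HasCompactSupport g') (z : ℂ) :
    cauchyTransform (fun w ↦ g w - g' w) z = cauchyTransform g z - cauchyTransform g' z := by
  simp only [cauchyTransform, mul_sub]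
  rw [integral_sub (integrable_inv_sub_mul hg hc z) (integrable_inv_sub_mul hg' hc' z), mul_sub]

lemma contDiff_cauchyTransform {k : ℕ∞} (hg : ContDiff ℝ k g) (hc : HasCompactSupport g) :
    ContDiff ℝ k (cauchyTransform g) := by
  rw [cauchyTransform_eq_convolution]
  exact contDiff_const.mul (hc.contDiff_convolution_right _ locallyIntegrable_inv hg)

lemma dbar_cauchyTransform (hg : ContDiff ℝ 1 g) (hc : HasCompactSupport g) (z : ℂ) :
    dbar (cauchyTransform g) z = g z := by
  have hsmooth := hc.contDiff_convolution_right (n := 1) (ContinuousLinearMap.mul ℝ ℂ)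
    locallyIntegrable_inv hg
  have hdbar (t : ℂ) : dbar (fun t ↦ g (z - t)) t = -dbar g (z - t) :=
    dbar_comp_const_sub z (hg.differentiable one_ne_zero _)
  have hpompeiu : ∫ t, t⁻¹ * dbar g (z - t) = Real.pi * g z := by
    have := integral_inv_mul_dbar (h := fun t ↦ g (z - t)) (hg.comp (by fun_prop))
      (hc.comp_homeomorph (Homeomorph.subLeft z))
    simpa only [hdbar, mul_neg, integral_neg, neg_inj, sub_zero] using this
  rw [cauchyTransform_eq_convolution, dbar_const_mul _ (hsmooth.differentiable one_ne_zero z),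
    dbar_convolution_right locallyIntegrable_inv hg hc, convolution_def]
  simp only [ContinuousLinearMap.mul_apply', hpompeiu]
  exact inv_mul_cancel_left₀ (ofReal_ne_zero.mpr Real.pi_ne_zero) (g z)

end CauchyTransform

section Exhaustion

/-- The standard exhaustion of a set `Ω` by bounded subsets: the points at distance at most `n`
from `c` and at least `1 / (n + 1)` from the complement of `Ω`. It is written with `thickening`, so
that the second condition is void for `Ω = univ`. -/
def exhaustion {X : Type*} [PseudoMetricSpace X] (c : X) (Ω : Set X) (n : ℕ) : Set X :=
  closedBall c n \ thickening (1 / (n + 1)) Ωᶜ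

variable {X : Type*} [PseudoMetricSpace X] (c : X) {Ω : Set X} {n : ℕ}

lemma isCompact_exhaustion [ProperSpace X] : IsCompact (exhaustion c Ω n) :=
  (isCompact_closedBall c n).diff isOpen_thickening

lemma exhaustion_subset : exhaustion c Ω n ⊆ Ω := fun _ hx ↦
  not_notMem.mp fun hxΩ ↦ hx.2 (self_subset_thickening Nat.one_div_pos_of_nat _ hxΩ)

lemma exhaustion_subset_interior_succ : exhaustion c Ω n ⊆ interior (exhaustion c Ω (n + 1)) := by
  have hlt : (1 / ((n + 1 : ℕ) + 1) : ℝ) < 1 / (n + 1) := Nat.one_div_lt_one_div n.lt_succ_self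
  calc exhaustion c Ω n
      ⊆ ball c (n + 1 : ℕ) \ cthickening (1 / ((n + 1 : ℕ) + 1)) Ωᶜ :=
        sdiff_subset_sdiff (closedBall_subset_ball (by exact_mod_cast n.lt_succ_self))
          (cthickening_subset_thickening' Nat.one_div_pos_of_nat hlt _)
    _ ⊆ interior (exhaustion c Ω (n + 1)) :=
        interior_maximal
          (sdiff_subset_sdiff ball_subset_closedBall (thickening_subset_cthickening _ _))
          (isOpen_ball.sdiff isClosed_cthickening)

lemma monotone_exhaustion : Monotone (exhaustion c Ω) :=
  monotone_nat_of_le_succ fun _ ↦ (exhaustion_subset_interior_succ c).trans interior_subset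

lemma exists_mem_interior_exhaustion (hΩ : IsOpen Ω) {x : X} (hx : x ∈ Ω) :
    ∃ n, x ∈ interior (exhaustion c Ω n) := by
  obtain ⟨ε, hε, hball⟩ := Metric.isOpen_iff.mp hΩ x hx
  obtain ⟨n₁, hn₁⟩ := exists_nat_ge (dist x c)
  obtain ⟨n₂, hn₂⟩ := exists_nat_one_div_lt hε
  refine ⟨max n₁ n₂ + 1, exhaustion_subset_interior_succ c ⟨?_, fun hthick ↦ ?_⟩⟩
  · exact hn₁.trans (Nat.cast_le.mpr (le_max_left n₁ n₂))
  · obtain ⟨y, hy, hxy⟩ := mem_thickening_iff.mp hthick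
    refine hy (hball (mem_ball'.mpr (hxy.trans (lt_of_le_of_lt ?_ hn₂))))
    exact Nat.one_div_le_one_div (le_max_right n₁ n₂)

end Exhaustion

section KernelApproximation

lemma exists_norm_inv_one_sub_sub_sum_le {𝕜 : Type*} [NormedDivisionRing 𝕜]
    {q ε : ℝ} (hq : q < 1) (hε : 0 < ε) :
    ∃ N : ℕ, ∀ x : 𝕜, ‖x‖ ≤ q → ‖(1 - x)⁻¹ - ∑ k ∈ Finset.range N, x ^ k‖ ≤ ε := by
  obtain ⟨N, hN⟩ := exists_pow_lt_of_lt_one (mul_pos hε (sub_pos.mpr hq)) hq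
  refine ⟨N, fun x hx ↦ ?_⟩
  have hterm (k : ℕ) : ‖x ^ k‖ ≤ 1 * q ^ k := by
    rw [one_mul, norm_pow]
    gcongr
  have hsum : HasSum (fun k ↦ x ^ k) (1 - x)⁻¹ :=
    hasSum_geometric_of_norm_lt_one (hx.trans_lt hq)
  calc ‖(1 - x)⁻¹ - ∑ k ∈ Finset.range N, x ^ k‖
      = ‖∑ k ∈ Finset.range N, x ^ k - (1 - x)⁻¹‖ := norm_sub_rev _ _
    _ ≤ 1 * q ^ N / (1 - q) := norm_sub_le_of_geometric_bound_of_hasSum hq hterm hsum N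
    _ ≤ ε := by
      rw [one_mul, div_le_iff₀ (sub_pos.mpr hq)]
      exact hN.le

lemma exists_norm_inv_sub_sub_le_of_dist_lt {w b : ℂ} {δ ε : ℝ} (hwb : dist w b < δ)
    (hε : 0 < ε) : ∃ p : ℂ → ℂ, DifferentiableOn ℂ p {b}ᶜ ∧
      ∀ z, δ ≤ dist z b → ‖(z - w)⁻¹ - p z‖ ≤ ε := by
  have hδ : 0 < δ := dist_nonneg.trans_lt hwb
  obtain ⟨N, hN⟩ := exists_norm_inv_one_sub_sub_sum_le (𝕜 := ℂ) (q := dist w b / δ)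
    ((div_lt_one hδ).mpr hwb) (mul_pos hε hδ)
  refine ⟨fun z ↦ (z - b)⁻¹ * ∑ k ∈ Finset.range N, ((w - b) / (z - b)) ^ k, ?_, fun z hz ↦ ?_⟩
  · have hne : ∀ z ∈ ({b}ᶜ : Set ℂ), z - b ≠ 0 := fun z hz ↦ sub_ne_zero.mpr hz
    fun_prop (disch := assumption)
  · have hzb : z - b ≠ 0 := by
      rw [sub_ne_zero, ← dist_pos]
      exact hδ.trans_le hz
    have hratio : ‖(w - b) / (z - b)‖ ≤ dist w b / δ := by
      rw [norm_div, ← dist_eq_norm, ← dist_eq_norm]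
      gcongr
    have hkernel : (z - w)⁻¹ = (z - b)⁻¹ * (1 - (w - b) / (z - b))⁻¹ := by
      rw [← mul_inv, mul_one_sub, mul_div_cancel₀ _ hzb, sub_sub_sub_cancel_right]
    calc ‖(z - w)⁻¹ - (z - b)⁻¹ * ∑ k ∈ Finset.range N, ((w - b) / (z - b)) ^ k‖
        = (dist z b)⁻¹ *
            ‖(1 - (w - b) / (z - b))⁻¹ - ∑ k ∈ Finset.range N, ((w - b) / (z - b)) ^ k‖ := by
          rw [hkernel, ← mul_sub, norm_mul, norm_inv, ← dist_eq_norm]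
      _ ≤ δ⁻¹ * (ε * δ) := by gcongr; exact hN _ hratio
      _ = ε := by field_simp

lemma exists_norm_inv_sub_sub_le_of_lt_norm {w : ℂ} {R ε : ℝ} (hR : 0 ≤ R) (hw : R < ‖w‖)
    (hε : 0 < ε) : ∃ p : ℂ → ℂ, Differentiable ℂ p ∧
      ∀ z, ‖z‖ ≤ R → ‖(z - w)⁻¹ - p z‖ ≤ ε := by
  have hw₀ : 0 < ‖w‖ := hR.trans_lt hw
  obtain ⟨N, hN⟩ := exists_norm_inv_one_sub_sub_sum_le (𝕜 := ℂ) (q := R / ‖w‖)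
    ((div_lt_one hw₀).mpr hw) (mul_pos hε hw₀)
  refine ⟨fun z ↦ -w⁻¹ * ∑ k ∈ Finset.range N, (z / w) ^ k, by fun_prop, fun z hz ↦ ?_⟩
  have hratio : ‖z / w‖ ≤ R / ‖w‖ := by
    rw [norm_div]
    gcongr
  have hkernel : (z - w)⁻¹ = -w⁻¹ * (1 - z / w)⁻¹ := by
    rw [← inv_neg, ← mul_inv, mul_one_sub, neg_mul, mul_div_cancel₀ _ (norm_pos_iff.mp hw₀),
      sub_neg_eq_add, neg_add_eq_sub]
  calc ‖(z - w)⁻¹ - -w⁻¹ * ∑ k ∈ Finset.range N, (z / w) ^ k‖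
      = ‖w‖⁻¹ * ‖(1 - z / w)⁻¹ - ∑ k ∈ Finset.range N, (z / w) ^ k‖ := by
        rw [hkernel, ← mul_sub, norm_mul, norm_neg, norm_inv]
    _ ≤ ‖w‖⁻¹ * (ε * ‖w‖) := by gcongr; exact hN _ hratio
    _ = ε := by field_simp

lemma exists_norm_inv_sub_sub_le_on_exhaustion {Ω : Set ℂ} {n : ℕ} {w : ℂ}
    (hw : w ∉ exhaustion 0 Ω n) {ε : ℝ} (hε : 0 < ε) : ∃ p : ℂ → ℂ, DifferentiableOn ℂ p Ω ∧
      ∀ z ∈ exhaustion 0 Ω n, ‖(z - w)⁻¹ - p z‖ ≤ ε := by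
  rw [exhaustion, Set.mem_sdiff, not_and_not_right, mem_closedBall_zero_iff] at hw
  rcases le_or_gt ‖w‖ n with hwn | hwn
  · obtain ⟨b, hb, hwb⟩ := mem_thickening_iff.mp (hw hwn)
    obtain ⟨p, hp, hpε⟩ := exists_norm_inv_sub_sub_le_of_dist_lt hwb hε
    refine ⟨p, hp.mono fun z hz hzb ↦ hb (hzb ▸ hz), fun z hz ↦ hpε z ?_⟩
    exact le_of_not_gt fun hzb ↦ hz.2 (mem_thickening_iff.mpr ⟨b, hb, hzb⟩)
  · obtain ⟨p, hp, hpε⟩ := exists_norm_inv_sub_sub_le_of_lt_norm n.cast_nonneg hwn hε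
    exact ⟨p, hp.differentiableOn, fun z hz ↦ hpε z (mem_closedBall_zero_iff.mp hz.1)⟩

end KernelApproximation

section HolomorphicApproximation

lemma integral_mem_of_isClosed_submodule {α 𝕜 E : Type*} [MeasurableSpace α] {μ : Measure α}
    [RCLike 𝕜] [NormedAddCommGroup E] [NormedSpace ℝ E] [NormedSpace 𝕜 E] [CompleteSpace E]
    {S : Submodule 𝕜 E} (hS : IsClosed (S : Set E)) {F : α → E} (hF : Integrable F μ)
    (hFS : ∀ x, F x ∈ S) : ∫ x, F x ∂μ ∈ S := by
  have hzero (x : α) : S.mkQL (F x) = 0 := (Submodule.Quotient.mk_eq_zero S).mpr (hFS x)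
  have hcomm := S.mkQL.integral_comp_comm hF
  simp only [hzero, integral_zero] at hcomm
  exact (Submodule.Quotient.mk_eq_zero S).mp hcomm.symm

/-- The continuous functions on `K` that extend to a function holomorphic on `Ω`. -/
def holomorphicRestriction (Ω K : Set ℂ) : Submodule ℂ C(K, ℂ) where
  carrier := {φ | ∃ p : ℂ → ℂ, DifferentiableOn ℂ p Ω ∧ ∀ z : K, φ z = p z}
  add_mem' := by
    rintro _ _ ⟨p, hp, hφ⟩ ⟨q, hq, hψ⟩
    exact ⟨fun z ↦ p z + q z, hp.add hq, fun z ↦ by rw [ContinuousMap.add_apply, hφ, hψ]⟩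
  zero_mem' := ⟨0, differentiableOn_const 0, fun _ ↦ rfl⟩
  smul_mem' := by
    rintro c _ ⟨p, hp, hφ⟩
    exact ⟨fun z ↦ c * p z, hp.const_mul c, fun z ↦ by rw [ContinuousMap.smul_apply, hφ]; rfl⟩

variable {Ω K : Set ℂ}

lemma mem_topologicalClosure_holomorphicRestriction [CompactSpace K] (hKΩ : K ⊆ Ω) {φ : C(K, ℂ)} :
    φ ∈ (holomorphicRestriction Ω K).topologicalClosure ↔
      ∀ ε > 0, ∃ p : ℂ → ℂ, DifferentiableOn ℂ p Ω ∧ ∀ z : K, ‖φ z - p z‖ ≤ ε := by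
  rw [← SetLike.mem_coe, Submodule.topologicalClosure_coe, Metric.mem_closure_iff]
  refine ⟨fun h ε hε ↦ ?_, fun h ε hε ↦ ?_⟩
  · obtain ⟨ψ, ⟨p, hp, hψ⟩, hφψ⟩ := h ε hε
    refine ⟨p, hp, fun z ↦ ?_⟩
    rw [← hψ z, ← dist_eq_norm]
    exact (ContinuousMap.dist_apply_le_dist z).trans hφψ.le
  · obtain ⟨p, hp, hφp⟩ := h (ε / 2) (half_pos hε)
    refine ⟨⟨K.domRestrict p, (hp.continuousOn.mono hKΩ).domRestrict⟩, ⟨p, hp, fun _ ↦ rfl⟩, ?_⟩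
    refine ((ContinuousMap.dist_le (half_pos hε).le).mpr fun z ↦ ?_).trans_lt (half_lt_self hε)
    exact (dist_eq_norm _ _).trans_le (hφp z)

lemma continuous_mul_inv_sub {g : ℂ → ℂ} (hg : Continuous g) (hKg : Disjoint K (tsupport g)) :
    Continuous fun p : ℂ × K ↦ g p.1 * ((p.2 : ℂ) - p.1)⁻¹ := by
  refine continuous_iff_continuousAt.mpr fun ⟨w, z⟩ ↦ ?_
  by_cases hw : w ∈ tsupport g
  · have hzw : (z : ℂ) - w ≠ 0 := sub_ne_zero.mpr (hKg.ne_of_mem z.2 hw)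
    exact (hg.comp continuous_fst).continuousAt.mul
      (((continuous_subtype_val.comp continuous_snd).sub continuous_fst).continuousAt.inv₀ hzw)
  · have hzero : (fun p : ℂ × K ↦ g p.1 * ((p.2 : ℂ) - p.1)⁻¹) =ᶠ[𝓝 (w, z)] fun _ ↦ 0 := by
      filter_upwards [continuousAt_fst (notMem_tsupport_iff_eventuallyEq.mp hw)] with p hp
      rw [show g p.1 = 0 from hp, zero_mul]
    exact continuousAt_const.congr hzero.symm

lemma exists_norm_cauchyTransform_sub_le (hK : IsCompact K) (hKΩ : K ⊆ Ω) {g : ℂ → ℂ}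
    (hg : Continuous g) (hc : HasCompactSupport g) (hKg : Disjoint K (tsupport g))
    (hkernel : ∀ w ∈ support g, ∀ ε > 0, ∃ p : ℂ → ℂ, DifferentiableOn ℂ p Ω ∧
      ∀ z ∈ K, ‖(z - w)⁻¹ - p z‖ ≤ ε) {ε : ℝ} (hε : 0 < ε) :
    ∃ p : ℂ → ℂ, DifferentiableOn ℂ p Ω ∧ ∀ z ∈ K, ‖cauchyTransform g z - p z‖ ≤ ε := by
  have : CompactSpace K := isCompact_iff_compactSpace.mp hK
  let T := (holomorphicRestriction Ω K).topologicalClosure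
  let H : C(ℂ, C(K, ℂ)) := ContinuousMap.curry ⟨_, continuous_mul_inv_sub hg hKg⟩
  have hH : Integrable H := by
    refine H.continuous.integrable_of_hasCompactSupport (hc.mono fun w ↦ mt fun hw ↦ ?_)
    ext z
    exact mul_eq_zero_of_left hw _
  have hHT (w : ℂ) : H w ∈ T := by
    by_cases hw : g w = 0
    · convert T.zero_mem
      ext z
      exact mul_eq_zero_of_left hw _
    · refine (mem_topologicalClosure_holomorphicRestriction hKΩ).mpr fun ε hε ↦ ?_
      have hw : 0 < ‖g w‖ := norm_pos_iff.mpr hw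
      obtain ⟨p, hp, hpε⟩ := hkernel w (norm_pos_iff.mp hw) (ε / ‖g w‖) (div_pos hε hw)
      refine ⟨fun z ↦ g w * p z, hp.const_mul _, fun z ↦ ?_⟩
      calc ‖g w * ((z : ℂ) - w)⁻¹ - g w * p z‖
          = ‖g w‖ * ‖((z : ℂ) - w)⁻¹ - p z‖ := by rw [← mul_sub, norm_mul]
        _ ≤ ‖g w‖ * (ε / ‖g w‖) := by gcongr; exact hpε z z.2
        _ = ε := mul_div_cancel₀ ε hw.ne'
  have hmem : (Real.pi : ℂ)⁻¹ • ∫ w, H w ∈ T :=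
    T.smul_mem _ (integral_mem_of_isClosed_submodule
      (Submodule.isClosed_topologicalClosure _) hH hHT)
  have heval (z : K) : (∫ w, H w) z = ∫ w, ((z : ℂ) - w)⁻¹ * g w := by
    rw [← ContinuousMap.evalCLM_apply ℂ, ← ContinuousLinearMap.integral_comp_comm _ hH]
    exact integral_congr_ae (.of_forall fun w ↦ mul_comm _ _)
  obtain ⟨p, hp, hpε⟩ := (mem_topologicalClosure_holomorphicRestriction hKΩ).mp hmem ε hε
  refine ⟨p, hp, fun z hz ↦ ?_⟩
  rw [cauchyTransform, ← heval ⟨z, hz⟩]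
  exact hpε ⟨z, hz⟩

end HolomorphicApproximation

section Cutoff

lemma exists_contDiff_hasCompactSupport_eqOn {E F : Type*} [NormedAddCommGroup E] [NormedSpace ℝ E]
    [FiniteDimensional ℝ E] [NormedAddCommGroup F] [NormedSpace ℝ F] {Ω K : Set E} {f : E → F}
    {k : ℕ∞} (hΩ : IsOpen Ω) (hf : ContDiffOn ℝ k f Ω) (hK : IsCompact K) (hKΩ : K ⊆ Ω) :
    ∃ g : E → F, ContDiff ℝ k g ∧ HasCompactSupport g ∧ EqOn g f K := by
  have : ProperSpace E := FiniteDimensional.proper_real E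
  obtain ⟨L, hL, hKL, hLΩ⟩ := exists_compact_between hK hΩ hKΩ
  obtain ⟨χ, hχK, hχL, -⟩ :=
    exists_contMDiffMap_one_nhds_of_subset_interior 𝓘(ℝ, E) (n := k) hK.isClosed hKL
  have hsupport : tsupport χ ⊆ L :=
    closure_minimal (fun x hx ↦ not_notMem.mp fun hxL ↦ hx (hχL x hxL)) hL.isClosed
  refine ⟨fun x ↦ χ x • f x, contDiff_iff_contDiffAt.mpr fun x ↦ ?_, ?_, fun x hx ↦ ?_⟩
  · by_cases hx : x ∈ Ω
    · exact χ.contMDiff.contDiff.contDiffAt.smul (hf.contDiffAt (hΩ.mem_nhds hx))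
    · have hzero : (fun x ↦ χ x • f x) =ᶠ[𝓝 x] fun _ ↦ 0 := by
        filter_upwards [notMem_tsupport_iff_eventuallyEq.mp fun h ↦ hx (hLΩ (hsupport h))] with y hy
        rw [show χ y = 0 from hy, zero_smul]
      exact contDiffAt_const.congr_of_eventuallyEq hzero
  · exact HasCompactSupport.smul_right (hL.of_isClosed_subset (isClosed_tsupport _) hsupport)
  · simp only [hχK.self_of_nhdsSet x hx, one_smul]

end Cutoff

section Limits

lemma exists_tendstoUniformlyOn_of_norm_sub_le {α E : Type*} [NormedAddCommGroup E]
    [CompleteSpace E] {u : ℕ → α → E} {K : ℕ → Set α} {b : ℕ → ℝ} (hK : Monotone K)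
    (hb : Summable b) (hu : ∀ n, ∀ x ∈ K n, ‖u (n + 1) x - u n x‖ ≤ b n) :
    ∃ v : α → E, ∀ m, TendstoUniformlyOn u v atTop (K m) := by
  refine ⟨fun x ↦ u 0 x + ∑' n, (u (n + 1) x - u n x), fun m ↦ ?_⟩
  have hbound : ∀ᶠ n in atTop, ∀ x ∈ K m, ‖u (n + 1) x - u n x‖ ≤ b n :=
    eventually_atTop.mpr ⟨m, fun n hn x hx ↦ hu n x (hK hn hx)⟩
  have hpartial := tendstoUniformlyOn_tsum_nat_eventually hb hbound
  have htelescope (n : ℕ) (x : α) :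
      u n x = u 0 x + ∑ j ∈ Finset.range n, (u (j + 1) x - u j x) := by
    rw [Finset.sum_range_sub fun j ↦ u j x, add_sub_cancel]
  rw [Metric.tendstoUniformlyOn_iff] at hpartial ⊢
  intro ε hε
  filter_upwards [hpartial ε hε] with n hn x hx
  rw [htelescope n x, dist_add_left]
  exact hn x hx

lemma contDiffOn_and_eqOn_dbar_of_tendstoLocallyUniformlyOn {ι : Type*} {φ : Filter ι} [φ.NeBot]
    {U : Set ℂ} (hU : IsOpen U) {k : ℕ∞} (hk : k ≠ 0) {u : ι → ℂ → ℂ} {v f : ℂ → ℂ}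
    (hu : ∀ᶠ i in φ, ContDiffOn ℝ k (u i) U ∧ EqOn (dbar (u i)) f U)
    (hv : TendstoLocallyUniformlyOn u v φ U) : ContDiffOn ℝ k v U ∧ EqOn (dbar v) f U := by
  obtain ⟨j, huj, hj⟩ := hu.exists
  have hdiff {g : ℂ → ℂ} (hg : ContDiffOn ℝ k g U) {z : ℂ} (hz : z ∈ U) : DifferentiableAt ℝ g z :=
    (hg.differentiableOn (by exact_mod_cast hk)).differentiableAt (hU.mem_nhds hz)
  have hholo : ∀ᶠ i in φ, DifferentiableOn ℂ (fun z ↦ u j z - u i z) U := by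
    filter_upwards [hu] with i ⟨hui, hi⟩ z hz
    refine (differentiableAt_complex_iff_dbar_eq_zero.mpr ?_).differentiableWithinAt
    refine ⟨(hdiff huj hz).sub (hdiff hui hz), ?_⟩
    rw [dbar_sub (hdiff huj hz) (hdiff hui hz), hi hz, hj hz, sub_self]
  have hlim : DifferentiableOn ℂ (fun z ↦ u j z - v z) U := by
    refine TendstoLocallyUniformlyOn.differentiableOn (F := fun i z ↦ u j z - u i z) ?_ hholo hU
    simpa only [Metric.tendstoLocallyUniformlyOn_iff, dist_sub_left] using hv
  have hsplit : v = fun z ↦ u j z - (u j z - v z) := by simp only [sub_sub_cancel]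
  rw [hsplit]
  refine ⟨huj.sub ((hlim.contDiffOn hU).restrict_scalars ℝ), fun z hz ↦ ?_⟩
  rw [dbar_sub_of_differentiableAt_complex (hdiff huj hz) (hlim.differentiableAt (hU.mem_nhds hz)),
    hj hz]

end Limits

section Solution

variable {Ω : Set ℂ}

lemma exists_norm_cauchyTransform_sub_sub_le_on_exhaustion {g g' : ℂ → ℂ} (hg : Continuous g)
    (hc : HasCompactSupport g) (hg' : Continuous g') (hc' : HasCompactSupport g') {n : ℕ}
    (hgg' : EqOn g g' (exhaustion 0 Ω (n + 1))) {ε : ℝ} (hε : 0 < ε) :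
    ∃ p : ℂ → ℂ, DifferentiableOn ℂ p Ω ∧
      ∀ z ∈ exhaustion 0 Ω n, ‖cauchyTransform g z - cauchyTransform g' z - p z‖ ≤ ε := by
  have hzero {w : ℂ} (hw : w ∈ exhaustion 0 Ω (n + 1)) : g w - g' w = 0 := sub_eq_zero.mpr (hgg' hw)
  have hdisjoint : Disjoint (exhaustion 0 Ω n) (tsupport fun w ↦ g w - g' w) := by
    refine (subset_compl_iff_disjoint_left.mp ?_).mono_left (exhaustion_subset_interior_succ 0)
    exact closure_minimal (fun w hw hint ↦ hw (hzero (interior_subset hint)))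
      isOpen_interior.isClosed_compl
  simp only [← cauchyTransform_sub hg hc hg' hc']
  refine exists_norm_cauchyTransform_sub_le (isCompact_exhaustion 0) (exhaustion_subset 0)
    (hg.sub hg') (hc.sub hc') hdisjoint (fun w hw ε hε ↦ ?_) hε
  exact exists_norm_inv_sub_sub_le_on_exhaustion
    (fun hwn ↦ hw (hzero (monotone_exhaustion 0 n.le_succ hwn))) hε

variable {f : ℂ → ℂ} {k : ℕ∞}

lemma exists_seq_eqOn_dbar_exhaustion (hΩ : IsOpen Ω) (hk : k ≠ 0) (hf : ContDiffOn ℝ k f Ω) :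
    ∃ u : ℕ → ℂ → ℂ,
      (∀ n, ContDiffOn ℝ k (u n) Ω ∧ EqOn (dbar (u n)) f (exhaustion 0 Ω n)) ∧
      ∀ n, ∀ z ∈ exhaustion 0 Ω n, ‖u (n + 1) z - u n z‖ ≤ (1 / 2) ^ n := by
  have hk₁ : (1 : WithTop ℕ∞) ≤ k := by exact_mod_cast Order.one_le_iff_ne_zero.mpr hk
  choose g hg hc hgf using fun n ↦ exists_contDiff_hasCompactSupport_eqOn hΩ hf
    (isCompact_exhaustion 0 (n := n + 1)) (exhaustion_subset 0)
  have hgg (n : ℕ) : EqOn (g (n + 1)) (g n) (exhaustion 0 Ω (n + 1)) := fun z hz ↦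
    (hgf (n + 1) (monotone_exhaustion 0 (n + 1).le_succ hz)).trans (hgf n hz).symm
  choose p hp hpn using fun n ↦ exists_norm_cauchyTransform_sub_sub_le_on_exhaustion
    (hg (n + 1)).continuous (hc (n + 1)) (hg n).continuous (hc n) (hgg n)
    (show (0 : ℝ) < (1 / 2) ^ n by positivity)
  have hsum (n : ℕ) : DifferentiableOn ℂ (fun z ↦ ∑ j ∈ Finset.range n, p j z) Ω :=
    DifferentiableOn.fun_sum fun j _ ↦ hp j
  have hsmooth (n : ℕ) : ContDiff ℝ k (cauchyTransform (g n)) :=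
    contDiff_cauchyTransform (hg n) (hc n)
  refine ⟨fun n z ↦ cauchyTransform (g n) z - ∑ j ∈ Finset.range n, p j z,
    fun n ↦ ⟨?_, fun z hz ↦ ?_⟩, fun n z hz ↦ ?_⟩
  · exact (hsmooth n).contDiffOn.sub (((hsum n).contDiffOn hΩ).restrict_scalars ℝ)
  · rw [dbar_sub_of_differentiableAt_complex
      ((hsmooth n).differentiable (by exact_mod_cast hk) z)
      ((hsum n).differentiableAt (hΩ.mem_nhds (exhaustion_subset 0 hz))),
      dbar_cauchyTransform ((hg n).of_le hk₁) (hc n),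
      hgf n (monotone_exhaustion 0 n.le_succ hz)]
  · convert hpn n z hz using 2
    simp only [Finset.sum_range_succ]
    ring

theorem stmt12_general (hΩ : IsOpen Ω) (hk : k ≠ 0) (hf : ContDiffOn ℝ k f Ω) :
    ∃ u : ℂ → ℂ, ContDiffOn ℝ k u Ω ∧ ∀ z ∈ Ω, dbar u z = f z := by
  obtain ⟨u, hu, hdist⟩ := exists_seq_eqOn_dbar_exhaustion hΩ hk hf
  obtain ⟨v, hv⟩ := exists_tendstoUniformlyOn_of_norm_sub_le (monotone_exhaustion 0)
    summable_geometric_two hdist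
  have hlocal (m : ℕ) : ContDiffOn ℝ k v (interior (exhaustion 0 Ω m)) ∧
      EqOn (dbar v) f (interior (exhaustion 0 Ω m)) := by
    have hsub : interior (exhaustion 0 Ω m) ⊆ exhaustion 0 Ω m := interior_subset
    refine contDiffOn_and_eqOn_dbar_of_tendstoLocallyUniformlyOn isOpen_interior hk ?_
      ((hv m).mono hsub).tendstoLocallyUniformlyOn
    filter_upwards [eventually_ge_atTop m] with n hmn
    exact ⟨(hu n).1.mono (hsub.trans (exhaustion_subset 0)),
      (hu n).2.mono (hsub.trans (monotone_exhaustion 0 hmn))⟩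
  refine ⟨v, fun z hz ↦ ?_, fun z hz ↦ ?_⟩ <;>
    obtain ⟨m, hm⟩ := exists_mem_interior_exhaustion 0 hΩ hz
  · exact ((hlocal m).1.contDiffAt (isOpen_interior.mem_nhds hm)).contDiffWithinAt
  · exact (hlocal m).2 hm

end Solution

/-- for any nonempty open `Ω ⊆ ℂ`, the Cauchy-Riemann operator
`∂̄ : C^∞(Ω, ℂ) → C^∞(Ω, ℂ)` is surjective. -/
theorem stmt12 (Ω : Set ℂ) (hΩ : IsOpen Ω) (hne : Ω.Nonempty)
    (f : ℂ → ℂ) (hf : ContDiffOn ℝ (⊤ : ℕ∞) f Ω) :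
    ∃ u : ℂ → ℂ, ContDiffOn ℝ (⊤ : ℕ∞) u Ω ∧ ∀ z ∈ Ω, dbar u z = f z :=
  stmt12_general hΩ ENat.top_ne_zero hf
end

section
/- Let Ω₁ ⊂ Ω₂ ⊂ ℝ^d be open and nonempty with D := inf{‖x − y‖_∞ : x ∈ Ω₁, y ∈ ∂Ω₂} > 0, let ν₁, ν₂ : Ω₂ → (0, ∞) be continuous with ν₁ ≤ ν₂, and suppose that for every ε > 0 there exists a compact set K ⊂ closure(Ω₁) such that ν₁(x) ≤ ε ν₂(x) for all x ∈ Ω₁ \ K. Then for every f ∈ C^∞(Ω₂) with sup_{x ∈ Ω₂, |β| ≤ m} |∂^β f(x)| ν₂(x) < ∞ for all m, every m ∈ ℕ₀ and every ε > 0, there exists φ ∈ C_c^∞(Ω₂) such that sup_{x ∈ Ω₁, |β| ≤ m} |∂^β(φf − f)(x)| ν₁(x) ≤ ε · (C(m, D) + 1) · sup_{x ∈ Ω₂, |β| ≤ m} |∂^β f(x)| ν₂(x), where C(m, D) depends only on m and D (not on ε or f); moreover φf has compact support in Ω₂. -/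
/-- Real partial derivative in the direction `v`. -/
noncomputable def pdirV {d : ℕ} (v : Fin d → ℝ) (φ : (Fin d → ℝ) → ℂ) : (Fin d → ℝ) → ℂ :=
  fun x => fderiv ℝ φ x v

/-- Iterated partial derivative `∂^β` for a multi-index `β : Fin d → ℕ`. -/
noncomputable def pdM {d : ℕ} (β : Fin d → ℕ) (φ : (Fin d → ℝ) → ℂ) : (Fin d → ℝ) → ℂ :=
  ((List.finRange d).map (fun i => (pdirV (Pi.single i 1))^[β i])).foldr (· ∘ ·) id φ

/-!
The cutoff `φ` is the indicator function of a neighbourhood of `K` mollified at scale `D / 6`. Its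
derivatives fall on the mollifier, so they are bounded by `L¹` norms that depend on `D` but not on
`K`. Where `φ = 1` near `x` the difference `∂^β(φf - f)(x)` vanishes; elsewhere `x ∉ K`, the Leibniz
rule bounds it by a constant times `max_{|γ| ≤ m} |∂^γ f(x)|`, and `ν₁ ≤ ε ν₂` supplies the factor
`ε`. In `∂^β(φf)` each factor is differentiated along sublists of the list of the `|β|` coordinate
directions of `β`. A sublist of this ordered list is the list of some `γ ≤ β`, so partial
derivatives need not be permuted.
-/

open Filter MeasureTheory Metric Set Topology
open ContinuousLinearMap (lsmul)
open scoped ContDiff Convolution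

section IteratedDirDeriv

variable {𝕜 E F : Type*} [NontriviallyNormedField 𝕜] [NormedAddCommGroup E] [NormedSpace 𝕜 E]
  [NormedAddCommGroup F] [NormedSpace 𝕜 F]

variable (𝕜) in
/-- The iterated directional derivative `∂_{v₁} ⋯ ∂_{vₖ} f` along a list `[v₁, …, vₖ]` of
directions, the last direction being differentiated first. Single derivatives can be
split off from it at either end, which `∂^β` does not allow. -/
noncomputable def iteratedDirDeriv (L : List E) (f : E → F) : E → F :=
  L.foldr (fun v g x => fderiv 𝕜 g x v) f

lemma iteratedDirDeriv_append (A L : List E) (f : E → F) :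
    iteratedDirDeriv 𝕜 (A ++ L) f = iteratedDirDeriv 𝕜 A (iteratedDirDeriv 𝕜 L f) :=
  List.foldr_append

lemma iteratedDirDeriv_concat (L : List E) (v : E) (f : E → F) :
    iteratedDirDeriv 𝕜 (L ++ [v]) f = iteratedDirDeriv 𝕜 L fun x => fderiv 𝕜 f x v :=
  iteratedDirDeriv_append L [v] f

lemma iteratedDirDeriv_replicate (n : ℕ) (v : E) (f : E → F) :
    iteratedDirDeriv 𝕜 (List.replicate n v) f = (fun g x => fderiv 𝕜 g x v)^[n] f := by
  induction n with
  | zero => rfl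
  | succ n ih => rw [Function.iterate_succ_apply', ← ih]; rfl

lemma eventuallyEq_iteratedDirDeriv {f g : E → F} {x : E} (h : f =ᶠ[𝓝 x] g) (L : List E) :
    iteratedDirDeriv 𝕜 L f =ᶠ[𝓝 x] iteratedDirDeriv 𝕜 L g := by
  induction L with
  | nil => exact h
  | cons v L ih => exact (EventuallyEq.fderiv (𝕜 := 𝕜) ih).mono fun y hy => DFunLike.congr_fun hy v

lemma contDiffAt_fderiv_apply_const {n : WithTop ℕ∞} {f : E → F} {x : E}
    (hf : ContDiffAt 𝕜 (n + 1) f x) (v : E) : ContDiffAt 𝕜 n (fun y => fderiv 𝕜 f y v) x :=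
  hf.fderiv_right_succ.clm_apply contDiffAt_const

lemma eventually_differentiableAt_of_contDiffAt {n : WithTop ℕ∞} {f : E → F} {x : E}
    (hf : ContDiffAt 𝕜 n f x) (hn : n ≠ 0) : ∀ᶠ y in 𝓝 x, DifferentiableAt 𝕜 f y :=
  ((hf.of_le (ENat.one_le_iff_ne_zero_withTop.2 hn)).eventually (by simp)).mono fun _ hy =>
    hy.differentiableAt one_ne_zero

lemma iteratedDirDeriv_add {L : List E} {f g : E → F} {x : E}
    (hf : ContDiffAt 𝕜 L.length f x) (hg : ContDiffAt 𝕜 L.length g x) :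
    iteratedDirDeriv 𝕜 L (fun y => f y + g y) x =
      iteratedDirDeriv 𝕜 L f x + iteratedDirDeriv 𝕜 L g x := by
  induction L using List.reverseRecOn generalizing f g with
  | nil => rfl
  | append_singleton L v ih =>
    rw [List.length_append, List.length_singleton, Nat.cast_add, Nat.cast_one] at hf hg
    have hsum : (fun y => fderiv 𝕜 (fun z => f z + g z) y v) =ᶠ[𝓝 x]
        fun y => fderiv 𝕜 f y v + fderiv 𝕜 g y v := by
      filter_upwards [eventually_differentiableAt_of_contDiffAt hf (by simp),
        eventually_differentiableAt_of_contDiffAt hg (by simp)] with y hfy hgy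
      rw [fderiv_fun_add hfy hgy, add_apply]
    simp only [iteratedDirDeriv_concat]
    rw [(eventuallyEq_iteratedDirDeriv hsum L).eq_of_nhds,
      ih (contDiffAt_fderiv_apply_const hf v) (contDiffAt_fderiv_apply_const hg v)]

lemma norm_iteratedDirDeriv_smul_le {𝕜' : Type*} [NormedRing 𝕜'] [NormedAlgebra 𝕜 𝕜']
    [Module 𝕜' F] [IsBoundedSMul 𝕜' F] [IsScalarTower 𝕜 𝕜' F] {L : List E} {c : E → 𝕜'}
    {f : E → F} {x : E} {M N : ℝ}
    (hc : ContDiffAt 𝕜 L.length c x) (hf : ContDiffAt 𝕜 L.length f x)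
    (hM : ∀ A, A.Sublist L → ‖iteratedDirDeriv 𝕜 A c x‖ ≤ M)
    (hN : ∀ A, A.Sublist L → ‖iteratedDirDeriv 𝕜 A f x‖ ≤ N) :
    ‖iteratedDirDeriv 𝕜 L (fun y => c y • f y) x‖ ≤ 2 ^ L.length * (M * N) := by
  induction L using List.reverseRecOn generalizing c f with
  | nil =>
    have hc0 : ‖c x‖ ≤ M := hM [] (List.Sublist.refl _)
    have hf0 : ‖f x‖ ≤ N := hN [] (List.Sublist.refl _)
    calc ‖c x • f x‖ ≤ ‖c x‖ * ‖f x‖ := norm_smul_le _ _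
      _ ≤ M * N := by gcongr; exact (norm_nonneg _).trans hc0
      _ = 2 ^ 0 * (M * N) := by rw [pow_zero, one_mul]
  | append_singleton L v ih =>
    rw [List.length_append, List.length_singleton, Nat.cast_add, Nat.cast_one] at hc hf
    have hprod : (fun y => fderiv 𝕜 (fun z => c z • f z) y v) =ᶠ[𝓝 x]
        fun y => c y • fderiv 𝕜 f y v + fderiv 𝕜 c y v • f y := by
      filter_upwards [eventually_differentiableAt_of_contDiffAt hc (by simp),
        eventually_differentiableAt_of_contDiffAt hf (by simp)] with y hcy hfy
      rw [fderiv_fun_smul hcy hfy]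
      rfl
    have hc' := contDiffAt_fderiv_apply_const hc v
    have hf' := contDiffAt_fderiv_apply_const hf v
    have hc₀ : ContDiffAt 𝕜 L.length c x := hc.of_le le_self_add
    have hf₀ : ContDiffAt 𝕜 L.length f x := hf.of_le le_self_add
    have derivOnF := ih hc₀ hf' (fun A hA => hM A (hA.trans (List.sublist_append_left _ _)))
      fun A hA => by simpa only [iteratedDirDeriv_concat] using hN _ (hA.append_right [v])
    have derivOnC := ih hc' hf₀
      (fun A hA => by simpa only [iteratedDirDeriv_concat] using hM _ (hA.append_right [v]))
      fun A hA => hN A (hA.trans (List.sublist_append_left _ _))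
    rw [iteratedDirDeriv_concat, (eventuallyEq_iteratedDirDeriv hprod L).eq_of_nhds,
      iteratedDirDeriv_add (hc₀.fun_smul hf') (hc'.fun_smul hf₀)]
    calc _ ≤ 2 ^ L.length * (M * N) + 2 ^ L.length * (M * N) :=
          norm_add_le_of_le derivOnF derivOnC
      _ = 2 ^ (L ++ [v]).length * (M * N) := by
          rw [List.length_append, List.length_singleton, pow_succ]; ring

end IteratedDirDeriv

section Mollification

variable {E F : Type*} [NormedAddCommGroup E] [MeasurableSpace E] {μ : Measure E}
  [NormedAddCommGroup F] [NormedSpace ℝ F]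

lemma norm_convolution_le_integral_norm {ρ : E → ℝ} {u : E → F} (hρ : Integrable ρ μ) {C : ℝ}
    (hu : ∀ t, ‖u t‖ ≤ C) (x : E) :
    ‖(ρ ⋆[lsmul ℝ ℝ, μ] u) x‖ ≤ (∫ t, ‖ρ t‖ ∂μ) * C := by
  rw [convolution_lsmul, ← integral_mul_const]
  refine norm_integral_le_of_norm_le (hρ.norm.mul_const C) (ae_of_all _ fun t => ?_)
  rw [norm_smul]
  gcongr
  exact hu _

variable [NormedSpace ℝ E] [FiniteDimensional ℝ E] [BorelSpace E] [μ.IsAddHaarMeasure]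

lemma fderiv_convolution_left_apply {ρ : E → ℝ} {u : E → F} (hρ : ContDiff ℝ 1 ρ)
    (hρc : HasCompactSupport ρ) (hu : LocallyIntegrable u μ) (x v : E) :
    fderiv ℝ (ρ ⋆[lsmul ℝ ℝ, μ] u) x v = ((fun y => fderiv ℝ ρ y v) ⋆[lsmul ℝ ℝ, μ] u) x := by
  simp +singlePass only [← convolution_flip]
  rw [(hρc.hasFDerivAt_convolution_right _ hu hρ x).fderiv, convolution_precompR_apply _ hu
    (hρc.fderiv ℝ) (hρ.continuous_fderiv one_ne_zero)]

lemma norm_iteratedDirDeriv_convolution_le {ρ : E → ℝ} {u : E → F} (hρ : ContDiff ℝ ∞ ρ)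
    (hρc : HasCompactSupport ρ) (hu : LocallyIntegrable u μ) {C : ℝ} (huC : ∀ t, ‖u t‖ ≤ C)
    (L : List E) (x : E) :
    ‖iteratedDirDeriv ℝ L (ρ ⋆[lsmul ℝ ℝ, μ] u) x‖ ≤
      (∫ t, ‖iteratedDirDeriv ℝ L ρ t‖ ∂μ) * C := by
  induction L using List.reverseRecOn generalizing ρ with
  | nil =>
    exact norm_convolution_le_integral_norm (hρ.continuous.integrable_of_hasCompactSupport hρc)
      huC x
  | append_singleton L v ih =>
    have hρ1 : ContDiff ℝ 1 ρ := hρ.of_le (by exact_mod_cast le_top)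
    have hρ' : ContDiff ℝ ∞ fun y => fderiv ℝ ρ y v :=
      (hρ.fderiv_right (by simp)).clm_apply contDiff_const
    simp only [iteratedDirDeriv_concat, fderiv_convolution_left_apply hρ1 hρc hu]
    exact ih hρ' (hρc.fderiv_apply ℝ v)

end Mollification

section Cutoff

variable {E : Type*} [NormedAddCommGroup E] [NormedSpace ℝ E] [FiniteDimensional ℝ E]

lemma exists_contDiff_approx_indicator {r : ℝ} (hr : 0 < r) :
    ∃ M : List E → ℝ, ∀ S : Set E, IsOpen S → ∃ φ : E → ℝ, ContDiff ℝ ∞ φ ∧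
      (∀ x, ball x r ⊆ S → φ x = 1) ∧ (∀ x, Disjoint (ball x r) S → φ x = 0) ∧
      ∀ L x, ‖iteratedDirDeriv ℝ L φ x‖ ≤ M L := by
  borelize E
  let μ : Measure E := Measure.addHaar
  let b : ContDiffBump (0 : E) := ⟨r / 2, r, half_pos hr, half_lt_self hr⟩
  let ρ := b.normed μ
  have hρ : ContDiff ℝ ∞ ρ := b.contDiff_normed
  have hρc : HasCompactSupport ρ := b.hasCompactSupport_normed
  refine ⟨fun L => ∫ t, ‖iteratedDirDeriv ℝ L ρ t‖ ∂μ, fun S hS => ?_⟩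
  let u : E → ℝ := S.indicator 1
  have hu : LocallyIntegrable u μ := (locallyIntegrable_const 1).indicator hS.measurableSet
  have hu1 : ∀ t, ‖u t‖ ≤ 1 := fun t => (norm_indicator_le_norm_self _ _).trans (by simp)
  have conv_eq {x : E} {a : ℝ} (h : ∀ y ∈ ball x r, u y = a) : (ρ ⋆[lsmul ℝ ℝ, μ] u) x = a := by
    have hx : u x = a := h x (mem_ball_self hr)
    rw [b.normed_convolution_eq_right fun y hy => (h y hy).trans hx.symm, hx]
  refine ⟨ρ ⋆[lsmul ℝ ℝ, μ] u, hρc.contDiff_convolution_left _ hρ hu, fun x hx => ?_,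
    fun x hx => ?_, fun L x => ?_⟩
  · exact conv_eq fun y hy => indicator_of_mem (hx hy) _
  · exact conv_eq fun y hy => indicator_of_notMem (disjoint_left.1 hx hy) _
  · simpa only [mul_one] using norm_iteratedDirDeriv_convolution_le hρ hρc hu hu1 L x

theorem exists_contDiff_cutoff {δ : ℝ} (hδ : 0 < δ) :
    ∃ M : List E → ℝ, ∀ K : Set E, ∃ φ : E → ℝ, ContDiff ℝ ∞ φ ∧
      tsupport φ ⊆ cthickening δ K ∧ φ =ᶠ[𝓝ˢ K] 1 ∧
      ∀ L x, ‖iteratedDirDeriv ℝ L φ x‖ ≤ M L := by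
  let r := δ / 3
  have hr : 0 < r := by positivity
  have hδr : δ = r + (r + r) := by simp only [r]; ring
  obtain ⟨M, hM⟩ := exists_contDiff_approx_indicator (E := E) hr
  refine ⟨M, fun K => ?_⟩
  obtain ⟨φ, hφ, hφ1, hφ0, hφM⟩ := hM (thickening (r + r) K) isOpen_thickening
  refine ⟨φ, hφ, closure_minimal (fun x hx => ?_) isClosed_cthickening, ?_, hφM⟩
  · obtain ⟨y, hyx, hyK⟩ := not_disjoint_iff.1 (mt (hφ0 x) hx)
    refine thickening_subset_cthickening δ K (hδr ▸ thickening_thickening_subset r (r + r) K ?_)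
    exact mem_thickening_iff.2 ⟨y, hyK, mem_ball'.1 hyx⟩
  · filter_upwards [isOpen_thickening.mem_nhdsSet.2 (self_subset_thickening hr K)] with x hx
    exact hφ1 x fun y hy => thickening_thickening_subset r r K (mem_thickening_iff.2 ⟨x, hx, hy⟩)

end Cutoff

lemma thickening_subset_of_forall_le_dist_frontier {E : Type*} [NormedAddCommGroup E]
    [NormedSpace ℝ E] [FiniteDimensional ℝ E] {s t : Set E} {D : ℝ} (hst : s ⊆ t)
    (h : ∀ x ∈ s, ∀ y ∈ frontier t, D ≤ dist x y) : thickening D s ⊆ t := by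
  rcases eq_or_ne t univ with rfl | ht
  · exact subset_univ _
  intro y hy
  obtain ⟨x, hx, hyx⟩ := mem_thickening_iff.1 hy
  obtain ⟨z, hz, hxz⟩ := exists_mem_frontier_infDist_compl_eq_dist (hst hx) ht
  refine ball_infDist_compl_subset (x := x) ?_
  rw [mem_ball, hxz]
  exact hyx.trans_le (h x hx z hz)

lemma exists_le_eq_flatMap_replicate_of_sublist {ι α : Type*} {I : List ι}
    (hI : I.Nodup) (b : ι → α) {β : ι → ℕ} {A : List α}
    (hA : A.Sublist (I.flatMap fun i => List.replicate (β i) (b i))) :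
    ∃ γ ≤ β, A = I.flatMap fun i => List.replicate (γ i) (b i) := by
  classical
  induction I generalizing A with
  | nil => exact ⟨β, le_rfl, List.sublist_nil.1 hA⟩
  | cons i I ih =>
    rw [List.flatMap_cons, List.sublist_append_iff] at hA
    obtain ⟨A₁, A₂, rfl, hA₁, hA₂⟩ := hA
    obtain ⟨k, hk, rfl⟩ := List.sublist_replicate_iff.1 hA₁
    obtain ⟨hi, hI⟩ := List.nodup_cons.1 hI
    obtain ⟨γ, hγ, rfl⟩ := ih hI hA₂
    refine ⟨Function.update γ i k, update_le_iff.2 ⟨hk, fun j _ => hγ j⟩, ?_⟩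
    rw [List.flatMap_cons, Function.update_self]
    congr 1
    refine List.flatMap_congr fun j hj => ?_
    rw [Function.update_of_ne (ne_of_mem_of_not_mem hj hi)]

section MultiIndex

variable {d : ℕ}

/-- The list of coordinate directions `e₀, …, e₀, e₁, …` in which `eᵢ` occurs `β i` times, so
that `∂^β` is the iterated directional derivative along it. -/
noncomputable def coordDirs (β : Fin d → ℕ) : List (Fin d → ℝ) :=
  (List.finRange d).flatMap fun i => List.replicate (β i) (Pi.single i 1)

lemma length_coordDirs (β : Fin d → ℕ) : (coordDirs β).length = ∑ i, β i := by
  simp [coordDirs, List.length_flatMap, Fin.sum_univ_def]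

lemma exists_le_eq_coordDirs_of_sublist {β : Fin d → ℕ} {A : List (Fin d → ℝ)}
    (hA : A.Sublist (coordDirs β)) : ∃ γ ≤ β, A = coordDirs γ :=
  exists_le_eq_flatMap_replicate_of_sublist (List.nodup_finRange d) _ hA

lemma pdM_eq_iteratedDirDeriv (β : Fin d → ℕ) (f : (Fin d → ℝ) → ℂ) :
    pdM β f = iteratedDirDeriv ℝ (coordDirs β) f := by
  unfold pdM coordDirs
  induction List.finRange d with
  | nil => rfl
  | cons i I ih =>
    rw [List.flatMap_cons, iteratedDirDeriv_append, iteratedDirDeriv_replicate, ← ih]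
    rfl

lemma pdM_congr_of_eventuallyEq {f g : (Fin d → ℝ) → ℂ} {x : Fin d → ℝ} (h : f =ᶠ[𝓝 x] g)
    (β : Fin d → ℕ) : pdM β f x = pdM β g x := by
  simpa only [pdM_eq_iteratedDirDeriv] using (eventuallyEq_iteratedDirDeriv h _).eq_of_nhds

lemma norm_pdM_ofReal_mul_sub_le {φ : (Fin d → ℝ) → ℝ} {f : (Fin d → ℝ) → ℂ} {x : Fin d → ℝ}
    {m : ℕ} {M N : ℝ} (hφ : ContDiffAt ℝ m φ x) (hf : ContDiffAt ℝ m f x)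
    (hM : ∀ β : Fin d → ℕ, ∑ i, β i ≤ m → ‖iteratedDirDeriv ℝ (coordDirs β) φ x‖ ≤ M)
    (hN : ∀ β : Fin d → ℕ, ∑ i, β i ≤ m → ‖pdM β f x‖ ≤ N)
    {β : Fin d → ℕ} (hβ : ∑ i, β i ≤ m) :
    ‖pdM β (fun y => φ y * f y) x - pdM β f x‖ ≤ (2 ^ m * M + 1) * N := by
  have hM0 : 0 ≤ M := (norm_nonneg _).trans (hM β hβ)
  have hN0 : 0 ≤ N := (norm_nonneg _).trans (hN β hβ)
  have hlen : (coordDirs β).length ≤ m := (length_coordDirs β).trans_le hβ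
  have hle : ∀ γ ≤ β, ∑ i, γ i ≤ m := fun γ hγ =>
    (Finset.sum_le_sum fun i _ => hγ i).trans hβ
  have leibniz : ‖pdM β (fun y => φ y * f y) x‖ ≤ 2 ^ (coordDirs β).length * (M * N) := by
    simp only [pdM_eq_iteratedDirDeriv, ← Complex.real_smul]
    refine norm_iteratedDirDeriv_smul_le (hφ.of_le (mod_cast hlen)) (hf.of_le (mod_cast hlen))
      (fun A hA => ?_) fun A hA => ?_ <;>
    obtain ⟨γ, hγ, rfl⟩ := exists_le_eq_coordDirs_of_sublist hA
    · exact hM γ (hle γ hγ)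
    · exact pdM_eq_iteratedDirDeriv γ f ▸ hN γ (hle γ hγ)
  calc ‖pdM β (fun y => φ y * f y) x - pdM β f x‖
      ≤ 2 ^ (coordDirs β).length * (M * N) + N := norm_sub_le_of_le leibniz (hN β hβ)
    _ ≤ 2 ^ m * (M * N) + N := by gcongr; norm_num
    _ = (2 ^ m * M + 1) * N := by ring

lemma norm_pdM_ofReal_mul_sub_mul_le {φ : (Fin d → ℝ) → ℝ} {f : (Fin d → ℝ) → ℂ}
    {x : Fin d → ℝ} {m : ℕ} {M B ε w₁ w₂ : ℝ}
    (hφ : ContDiffAt ℝ m φ x) (hf : ContDiffAt ℝ m f x)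
    (hM : ∀ β : Fin d → ℕ, ∑ i, β i ≤ m → ‖iteratedDirDeriv ℝ (coordDirs β) φ x‖ ≤ M)
    (hB : ∀ β : Fin d → ℕ, ∑ i, β i ≤ m → ‖pdM β f x‖ * w₂ ≤ B)
    (hw₁ : 0 ≤ w₁) (hw₂ : 0 < w₂) (hw : w₁ ≤ ε * w₂)
    {β : Fin d → ℕ} (hβ : ∑ i, β i ≤ m) :
    ‖pdM β (fun y => φ y * f y) x - pdM β f x‖ * w₁ ≤ ε * (2 ^ m * M + 1) * B := by
  have hest : ‖pdM β (fun y => φ y * f y) x - pdM β f x‖ ≤ (2 ^ m * M + 1) * (B / w₂) :=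
    norm_pdM_ofReal_mul_sub_le hφ hf hM (fun γ hγ => (le_div_iff₀ hw₂).2 (hB γ hγ)) hβ
  calc _ ≤ (2 ^ m * M + 1) * (B / w₂) * (ε * w₂) :=
        mul_le_mul hest hw hw₁ ((norm_nonneg _).trans hest)
    _ = ε * (2 ^ m * M + 1) * B := by field_simp

lemma finite_setOf_sum_le (m : ℕ) : {β : Fin d → ℕ | ∑ i, β i ≤ m}.Finite :=
  (Set.finite_Iic fun _ => m).subset fun β hβ i =>
    (Finset.single_le_sum (fun j _ => (β j).zero_le) (Finset.mem_univ i)).trans hβ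

variable (d) in
lemma exists_contDiff_cutoff_of_order_le (m : ℕ) {δ : ℝ} (hδ : 0 < δ) :
    ∃ M : ℝ, ∀ K : Set (Fin d → ℝ), ∃ φ : (Fin d → ℝ) → ℝ, ContDiff ℝ ∞ φ ∧
      tsupport φ ⊆ cthickening δ K ∧ φ =ᶠ[𝓝ˢ K] 1 ∧
      ∀ x, ∀ β : Fin d → ℕ, ∑ i, β i ≤ m → ‖iteratedDirDeriv ℝ (coordDirs β) φ x‖ ≤ M := by
  obtain ⟨M, hM⟩ := exists_contDiff_cutoff (E := Fin d → ℝ) hδ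
  obtain ⟨M', hM'⟩ := ((finite_setOf_sum_le m).image fun β => M (coordDirs β)).bddAbove
  refine ⟨M', fun K => ?_⟩
  obtain ⟨φ, hφ, hφK, hφ1, hφM⟩ := hM K
  exact ⟨φ, hφ, hφK, hφ1, fun x β hβ => (hφM _ x).trans (hM' (mem_image_of_mem _ hβ))⟩

end MultiIndex

theorem stmt15_general (d : ℕ) :
    ∃ C : ℕ → ℝ → ℝ, (∀ m D, 0 < C m D) ∧
      ∀ (m : ℕ) (D : ℝ) (Ω₁ Ω₂ : Set (Fin d → ℝ)),
        IsOpen Ω₂ → Ω₁ ⊆ Ω₂ → 0 < D → (∀ x ∈ Ω₁, ∀ y ∈ frontier Ω₂, D ≤ ‖x - y‖) →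
        ∀ ν₁ ν₂ : (Fin d → ℝ) → ℝ, (∀ x ∈ Ω₂, 0 ≤ ν₁ x) → (∀ x ∈ Ω₂, 0 < ν₂ x) →
          ∀ f : (Fin d → ℝ) → ℂ, ContDiffOn ℝ m f Ω₂ → ∀ ε : ℝ, 0 < ε →
            (∃ K : Set (Fin d → ℝ), IsCompact K ∧ K ⊆ closure Ω₁ ∧
              ∀ x ∈ Ω₁ \ K, ν₁ x ≤ ε * ν₂ x) →
            ∃ φ : (Fin d → ℝ) → ℂ,
              ContDiff ℝ ∞ φ ∧ HasCompactSupport φ ∧ tsupport φ ⊆ Ω₂ ∧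
              HasCompactSupport (fun x => φ x * f x) ∧
              ∀ B : ℝ, (∀ x ∈ Ω₂, ∀ β : Fin d → ℕ, (∑ i, β i) ≤ m →
                  ‖pdM β f x‖ * ν₂ x ≤ B) →
                ∀ x ∈ Ω₁, ∀ β : Fin d → ℕ, (∑ i, β i) ≤ m →
                  ‖pdM β (fun y => φ y * f y) x - pdM β f x‖ * ν₁ x ≤
                    ε * (C m D + 1) * B := by
  choose! M hM using fun (m : ℕ) (D : ℝ) (hD : 0 < D) =>
    exists_contDiff_cutoff_of_order_le d m (half_pos hD)
  refine ⟨fun m D => 2 ^ m * max 1 (M m D), fun m D => by positivity, ?_⟩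
  intro m D Ω₁ Ω₂ hΩ₂ hΩ hD hdist ν₁ ν₂ hν₁ hν₂ f hf ε hε ⟨K, hK, hKΩ, hKν⟩
  obtain ⟨φ, hφ, hφK, hφ1, hφM⟩ := hM m D hD K
  have hKΩ₂ : cthickening (D / 2) K ⊆ Ω₂ :=
    calc cthickening (D / 2) K ⊆ thickening D K :=
          cthickening_subset_thickening' hD (half_lt_self hD) K
      _ ⊆ thickening D (closure Ω₁) := thickening_subset_of_subset D hKΩ
      _ = thickening D Ω₁ := thickening_closure
      _ ⊆ Ω₂ := thickening_subset_of_forall_le_dist_frontier hΩ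
          fun x hx y hy => (hdist x hx y hy).trans_eq (dist_eq_norm x y).symm
  have hφK' : tsupport (fun x => (φ x : ℂ)) ⊆ cthickening (D / 2) K :=
    (closure_mono (Function.support_comp_subset Complex.ofReal_zero φ)).trans hφK
  have hφc : HasCompactSupport fun x => (φ x : ℂ) :=
    hK.cthickening.of_isClosed_subset (isClosed_tsupport _) hφK'
  refine ⟨fun x => φ x, Complex.ofRealCLM.contDiff.comp hφ, hφc, hφK'.trans hKΩ₂,
    hφc.mul_right, fun B hB x hx β hβ => ?_⟩
  have hx₂ : x ∈ Ω₂ := hΩ hx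
  by_cases hxK : x ∈ K
  · have hφf : (fun y => φ y * f y) =ᶠ[𝓝 x] f := by
      filter_upwards [hφ1.filter_mono (nhds_le_nhdsSet hxK)] with y hy
      rw [hy, Pi.one_apply, Complex.ofReal_one, one_mul]
    have hB0 : 0 ≤ B := (mul_nonneg (norm_nonneg _) (hν₂ x hx₂).le).trans (hB x hx₂ β hβ)
    rw [pdM_congr_of_eventuallyEq hφf, sub_self, norm_zero, zero_mul]
    positivity
  · exact norm_pdM_ofReal_mul_sub_mul_le (hφ.contDiffAt.of_le (mod_cast le_top))
      (hf.contDiffAt (hΩ₂.mem_nhds hx₂)) (fun γ hγ => le_max_of_le_right (hφM x γ hγ)) (hB x hx₂)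
      (hν₁ x hx₂) (hν₂ x hx₂) (hKν x ⟨hx, hxK⟩) hβ

/-- density of compactly supported functions, with a multiplicative constant
`C(m, D)` depending only on the order `m` and the sup-norm distance `D` between `Ω₁` and
`∂Ω₂`. (The norm on `Fin d → ℝ` is the sup-norm `‖·‖_∞`.) -/
theorem stmt15 (d : ℕ) :
    ∃ C : ℕ → ℝ → ℝ, (∀ m D, 0 < C m D) ∧
      ∀ (m : ℕ) (D : ℝ) (Ω₁ Ω₂ : Set (Fin d → ℝ)),
        IsOpen Ω₁ → IsOpen Ω₂ → Ω₁.Nonempty → Ω₁ ⊆ Ω₂ →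
        0 < D → (∀ x ∈ Ω₁, ∀ y ∈ frontier Ω₂, D ≤ ‖x - y‖) →
        ∀ ν₁ ν₂ : (Fin d → ℝ) → ℝ,
          ContinuousOn ν₁ Ω₂ → ContinuousOn ν₂ Ω₂ →
          (∀ x ∈ Ω₂, 0 < ν₁ x) → (∀ x ∈ Ω₂, 0 < ν₂ x) → (∀ x ∈ Ω₂, ν₁ x ≤ ν₂ x) →
          (∀ ε : ℝ, 0 < ε → ∃ K : Set (Fin d → ℝ), IsCompact K ∧ K ⊆ closure Ω₁ ∧
            ∀ x ∈ Ω₁ \ K, ν₁ x ≤ ε * ν₂ x) →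
          ∀ f : (Fin d → ℝ) → ℂ, ContDiffOn ℝ (⊤ : ℕ∞) f Ω₂ →
            (∀ m' : ℕ, ∃ B : ℝ, ∀ x ∈ Ω₂, ∀ β : Fin d → ℕ, (∑ i, β i) ≤ m' →
              ‖pdM β f x‖ * ν₂ x ≤ B) →
            ∀ ε : ℝ, 0 < ε → ∃ φ : (Fin d → ℝ) → ℂ,
              ContDiff ℝ (⊤ : ℕ∞) φ ∧ HasCompactSupport φ ∧ tsupport φ ⊆ Ω₂ ∧
              HasCompactSupport (fun x => φ x * f x) ∧
              ∀ B : ℝ, (∀ x ∈ Ω₂, ∀ β : Fin d → ℕ, (∑ i, β i) ≤ m →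
                  ‖pdM β f x‖ * ν₂ x ≤ B) →
                ∀ x ∈ Ω₁, ∀ β : Fin d → ℕ, (∑ i, β i) ≤ m →
                  ‖pdM β (fun y => φ y * f y) x - pdM β f x‖ * ν₁ x ≤
                    ε * (C m D + 1) * B := by
  obtain ⟨C, hC, h⟩ := stmt15_general d
  exact ⟨C, hC, fun m D Ω₁ Ω₂ _ hΩ₂ _ hΩ hD hdist ν₁ ν₂ _ _ hν₁ hν₂ _ hsmall f hf _ ε hε =>
    h m D Ω₁ Ω₂ hΩ₂ hΩ hD hdist ν₁ ν₂ (fun x hx => (hν₁ x hx).le) hν₂ f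
      (hf.of_le (mod_cast le_top)) ε hε (hsmall ε hε)⟩
end

section
/- Let 0 < r₀ < r₁ < r₂, q ∈ ℕ, and let Q_r = [−r, r]² ⊂ ℝ². For every m ∈ ℕ₀ there exist l ∈ ℕ₀ and C > 0 such that for all f ∈ C^∞(int Q_{r₂}, ℂ) and all multi-indices α with |α| ≤ m: sup_{x ∈ Q_{r₀}} |∂^α f(x)| ≤ C ( ‖f‖_{L^q(Q_{r₁})} + sup_{|β| ≤ l} ‖∂^β Δf‖_{L^q(Q_{r₁})} ), where Δ is the Laplacian. -/
open Complex

/-- Iterated real partial derivative `∂₁^a ∂₂^b f`. -/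
noncomputable def pdi (a b : ℕ) (f : ℂ → ℂ) : ℂ → ℂ := (pd 1)^[a] ((pd I)^[b] f)

/-- The Laplacian `Δ f = ∂₁² f + ∂₂² f`. -/
noncomputable def lap (f : ℂ → ℂ) : ℂ → ℂ := fun z => pdi 2 0 f z + pdi 0 2 f z

/-- The closed square `Q_r = [-r, r]² ⊆ ℝ² ≅ ℂ`. -/
def Qc (r : ℝ) : Set ℂ := {z : ℂ | |z.re| ≤ r ∧ |z.im| ≤ r}

/-- The open square `int Q_r = (-r, r)²`. -/
def Qo (r : ℝ) : Set ℂ := {z : ℂ | |z.re| < r ∧ |z.im| < r}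

/-!
The bump `Ψ(y) = exp(-1 / (R² - |y|²))` has gradient `∇Ψ(y) = -φ(y) y` with a nonnegative bump `φ`
of positive mass. The fundamental theorem of calculus along segments and an integration by parts
therefore give
`∫ φ(y) (g(x + y) - g(x)) dy = ∫₀¹ t ∫ Ψ(y) Δg(x + ty) dy dt`,
which controls `g(x)` by an average of `g` near `x` and the supremum of `|Δg|`. For `g = ∂^α f`,
moving `∂^α` onto `φ` bounds the average by the `L¹` norm of `f`, while `∂^α Δf` is bounded
pointwise by the `L¹` norms of its derivatives `∂₁^i ∂₂^j` with `i, j ≤ 1`, using the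
one-dimensional Sobolev inequality in each variable; this costs two further derivatives. Hölder's
inequality passes from `L¹` to `L^q`, and a cutoff reduces to `f` smooth on the whole plane.
-/

open MeasureTheory Metric Set Filter Topology
open scoped ContDiff InnerProductSpace Laplacian

section RadialPotential

variable {E F : Type*} [NormedAddCommGroup F] [NormedSpace ℝ F]

theorem sub_eq_integral_fderiv_segment [NormedAddCommGroup E] [NormedSpace ℝ E] [CompleteSpace F]
    {g : E → F} (hg : ContDiff ℝ 1 g) (x y : E) :
    g (x + y) - g x = ∫ t in (0 : ℝ)..1, fderiv ℝ g (x + t • y) y := by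
  have hderiv : ∀ t ∈ uIcc (0 : ℝ) 1,
      HasDerivAt (fun t : ℝ ↦ g (x + t • y)) (fderiv ℝ g (x + t • y) y) t := fun t _ ↦ by
    have hline : HasDerivAt (fun t : ℝ ↦ x + t • y) y t := by
      simpa using ((hasDerivAt_id t).smul_const y).const_add x
    exact (hg.differentiable one_ne_zero _).hasFDerivAt.comp_hasDerivAt t hline
  have hcont : Continuous fun t : ℝ ↦ fderiv ℝ g (x + t • y) y :=
    ((hg.continuous_fderiv one_ne_zero).comp (by fun_prop)).clm_apply continuous_const
  simp [intervalIntegral.integral_eq_sub_of_hasDerivAt hderiv (hcont.intervalIntegrable 0 1)]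

theorem integral_intervalIntegral_swap_of_isCompact {X : Type*} [TopologicalSpace X]
    [SecondCountableTopology X] [T2Space X] [MeasurableSpace X] [BorelSpace X] {μ : Measure X}
    [SFinite μ] [IsFiniteMeasureOnCompacts μ] {f : ℝ → X → F} (hf : Continuous (Function.uncurry f))
    {K : Set X} (hK : IsCompact K) (hf0 : ∀ t, ∀ y ∉ K, f t y = 0) (a b : ℝ) :
    ∫ y, (∫ t in a..b, f t y) ∂μ = ∫ t in a..b, ∫ y, f t y ∂μ := by
  have hint : IntegrableOn (Function.uncurry f) (uIoc a b ×ˢ K) (volume.prod μ) :=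
    (hf.continuousOn.integrableOn_compact (isCompact_uIcc.prod hK)).mono_set
      (prod_mono uIoc_subset_uIcc le_rfl)
  have hswap := intervalIntegral_integral_swap (μ := μ.restrict K) (f := f)
    (by rwa [Measure.prod_restrict])
  rw [← setIntegral_eq_integral_of_forall_compl_eq_zero (s := K) (fun y hy ↦ by simp [hf0 _ y hy]),
    ← hswap]
  exact intervalIntegral.integral_congr fun t _ ↦
    setIntegral_eq_integral_of_forall_compl_eq_zero (hf0 t)

theorem integral_smul_fderiv_eq_neg_of_hasCompactSupport {𝕜 : Type*} [NormedField 𝕜]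
    [NormedAlgebra ℝ 𝕜] [NormedSpace 𝕜 F] [IsScalarTower ℝ 𝕜 F] [NormedAddCommGroup E]
    [NormedSpace ℝ E] [FiniteDimensional ℝ E] [MeasurableSpace E] [BorelSpace E] {μ : Measure E}
    [μ.IsAddHaarMeasure] {φ : E → 𝕜} {g : E → F} (hφ : ContDiff ℝ 1 φ) (hc : HasCompactSupport φ)
    (hg : ContDiff ℝ 1 g) (v : E) :
    ∫ y, φ y • fderiv ℝ g y v ∂μ = -∫ y, fderiv ℝ φ y v • g y ∂μ := by
  have hφ' : Continuous fun y ↦ fderiv ℝ φ y v :=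
    (hφ.continuous_fderiv one_ne_zero).clm_apply continuous_const
  have hg' : Continuous fun y ↦ fderiv ℝ g y v :=
    (hg.continuous_fderiv one_ne_zero).clm_apply continuous_const
  exact integral_smul_fderiv_eq_neg_fderiv_smul_of_integrable
    ((hφ'.smul hg.continuous).integrable_of_hasCompactSupport (hc.fderiv_apply ℝ v).smul_right)
    ((hφ.continuous.smul hg').integrable_of_hasCompactSupport hc.smul_right)
    ((hφ.continuous.smul hg.continuous).integrable_of_hasCompactSupport hc.smul_right)
    (fun y _ ↦ hφ.differentiable one_ne_zero y) (fun y _ ↦ hg.differentiable one_ne_zero y)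

variable [NormedAddCommGroup E] [InnerProductSpace ℝ E]

/-- `Ψ` is a potential for the weight `φ`: both have compact support and `∇Ψ(y) = -φ(y) y`. It turns
the `φ`-average of the increments of a function into a `Ψ`-average of its Laplacian. The gradient
is encoded through its pairings with the vectors `v`. -/
structure IsRadialPotential (φ Ψ : E → ℝ) : Prop where
  continuous_weight : Continuous φ
  hasCompactSupport_weight : HasCompactSupport φ
  contDiff : ContDiff ℝ 1 Ψ
  hasCompactSupport : HasCompactSupport Ψ
  fderiv_apply : ∀ y v, fderiv ℝ Ψ y v = -(φ y * ⟪y, v⟫_ℝ)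

namespace IsRadialPotential

variable [FiniteDimensional ℝ E] [MeasurableSpace E] [BorelSpace E] {φ Ψ : E → ℝ}

theorem integral_smul_apply_self (h : IsRadialPotential φ Ψ) {ι : Type*} [Fintype ι]
    (b : OrthonormalBasis ι ℝ E) {X : E → E →L[ℝ] F} (hX : ContDiff ℝ 1 X) :
    ∫ y, φ y • X y y = ∫ y, Ψ y • ∑ i, fderiv ℝ X y (b i) (b i) := by
  have hXb : ∀ i, ContDiff ℝ 1 fun y ↦ X y (b i) := fun i ↦ hX.clm_apply contDiff_const
  have hderiv : ∀ i y, fderiv ℝ (fun y ↦ X y (b i)) y (b i) = fderiv ℝ X y (b i) (b i) :=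
    fun i y ↦ by
      rw [fderiv_clm_apply (hX.differentiable one_ne_zero y) (differentiableAt_const _)]
      simp
  have hexpand : ∀ y, φ y • X y y = ∑ i, -(fderiv ℝ Ψ y (b i) • X y (b i)) := fun y ↦ by
    have hrepr : X y y = ∑ i, ⟪b i, y⟫_ℝ • X y (b i) := by
      conv_lhs => arg 2; rw [← b.sum_repr' y]
      simp_rw [map_sum, map_smul]
    simp [hrepr, h.fderiv_apply, real_inner_comm, mul_smul, Finset.smul_sum]
  have hleft : ∀ i, Integrable fun y ↦ -(fderiv ℝ Ψ y (b i) • X y (b i)) := fun i ↦ by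
    have hcont := (h.contDiff.continuous_fderiv one_ne_zero).clm_apply
      (continuous_const (y := b i))
    exact ((hcont.smul (hXb i).continuous).integrable_of_hasCompactSupport
      (h.hasCompactSupport.fderiv_apply ℝ (b i)).smul_right).neg
  have hright : ∀ i, Integrable fun y ↦ Ψ y • fderiv ℝ X y (b i) (b i) := fun i ↦ by
    have hcont := ((hX.continuous_fderiv one_ne_zero).clm_apply
      (continuous_const (y := b i))).clm_apply (continuous_const (y := b i))
    exact (h.contDiff.continuous.smul hcont).integrable_of_hasCompactSupport
      h.hasCompactSupport.smul_right
  simp_rw [hexpand, Finset.smul_sum]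
  rw [integral_finsetSum _ fun i _ ↦ hleft i, integral_finsetSum _ fun i _ ↦ hright i]
  refine Finset.sum_congr rfl fun i _ ↦ ?_
  rw [integral_neg, ← integral_smul_fderiv_eq_neg_of_hasCompactSupport h.contDiff
    h.hasCompactSupport (hXb i)]
  simp_rw [hderiv]

theorem integral_smul_fderiv_segment (h : IsRadialPotential φ Ψ) {g : E → F}
    (hg : ContDiff ℝ 2 g) (x : E) (t : ℝ) :
    ∫ y, φ y • fderiv ℝ g (x + t • y) y = t • ∫ y, Ψ y • Δ g (x + t • y) := by
  have hdg : ContDiff ℝ 1 (fderiv ℝ g) := hg.fderiv_right (by norm_num)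
  have hX : ContDiff ℝ 1 fun y ↦ fderiv ℝ g (x + t • y) := hdg.comp (by fun_prop)
  have hderiv : ∀ y v, fderiv ℝ (fun y ↦ fderiv ℝ g (x + t • y)) y v =
      t • fderiv ℝ (fderiv ℝ g) (x + t • y) v := fun y v ↦ by
    rw [fderiv_comp_smul (f := fun z ↦ fderiv ℝ g (x + z)), fderiv_comp_add_left,
      FunLike.coe_smul, Pi.smul_apply]
  rw [h.integral_smul_apply_self (stdOrthonormalBasis ℝ E) hX, ← integral_smul]
  refine integral_congr_ae (Eventually.of_forall fun y ↦ ?_)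
  simp [hderiv, InnerProductSpace.laplacian_eq_iteratedFDeriv_stdOrthonormalBasis,
    iteratedFDeriv_two_apply, smul_comm t, Finset.smul_sum]

theorem integral_smul_sub_eq [CompleteSpace F] (h : IsRadialPotential φ Ψ) {g : E → F}
    (hg : ContDiff ℝ 2 g) (x : E) :
    ∫ y, φ y • (g (x + y) - g x) = ∫ t in (0 : ℝ)..1, t • ∫ y, Ψ y • Δ g (x + t • y) := by
  have hg1 : ContDiff ℝ 1 g := hg.of_le one_le_two
  have hcont : Continuous (Function.uncurry fun (t : ℝ) y ↦ φ y • fderiv ℝ g (x + t • y) y) :=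
    (h.continuous_weight.comp continuous_snd).smul
      (((hg1.continuous_fderiv one_ne_zero).comp (by fun_prop)).clm_apply continuous_snd)
  calc ∫ y, φ y • (g (x + y) - g x)
      = ∫ y, ∫ t in (0 : ℝ)..1, φ y • fderiv ℝ g (x + t • y) y := by
        simp_rw [sub_eq_integral_fderiv_segment hg1, intervalIntegral.integral_smul]
    _ = ∫ t in (0 : ℝ)..1, ∫ y, φ y • fderiv ℝ g (x + t • y) y :=
        integral_intervalIntegral_swap_of_isCompact hcont h.hasCompactSupport_weight
          (fun t y hy ↦ by simp [image_eq_zero_of_notMem_tsupport hy]) 0 1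
    _ = ∫ t in (0 : ℝ)..1, t • ∫ y, Ψ y • Δ g (x + t • y) := by
        simp_rw [h.integral_smul_fderiv_segment hg]

theorem norm_integral_smul_laplacian_le (h : IsRadialPotential φ Ψ) {R : ℝ}
    (hΨ : tsupport Ψ ⊆ closedBall 0 R) {g : E → F} {x : E} {S : ℝ}
    (hS : ∀ z ∈ closedBall x R, ‖Δ g z‖ ≤ S) {t : ℝ} (ht0 : 0 ≤ t) (ht1 : t ≤ 1) :
    ‖∫ y, Ψ y • Δ g (x + t • y)‖ ≤ (∫ y, ‖Ψ y‖) * S := by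
  rw [← integral_mul_const]
  refine norm_integral_le_of_norm_le
    ((h.contDiff.continuous.integrable_of_hasCompactSupport h.hasCompactSupport).norm.mul_const S)
    (Eventually.of_forall fun y ↦ ?_)
  rw [norm_smul]
  by_cases hy : y ∈ tsupport Ψ
  · have hyR : ‖y‖ ≤ R := by simpa using hΨ hy
    gcongr
    refine hS _ ?_
    rw [mem_closedBall, dist_self_add_left, norm_smul, Real.norm_of_nonneg ht0]
    exact (mul_le_of_le_one_left (norm_nonneg y) ht1).trans hyR
  · simp [image_eq_zero_of_notMem_tsupport hy]

theorem norm_integral_weight_smul_le [CompleteSpace F] (h : IsRadialPotential φ Ψ) {R : ℝ}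
    (hΨ : tsupport Ψ ⊆ closedBall 0 R) {g : E → F} (hg : ContDiff ℝ 2 g) {x : E} {S : ℝ}
    (hS : ∀ z ∈ closedBall x R, ‖Δ g z‖ ≤ S) :
    ‖(∫ y, φ y) • g x‖ ≤ ‖∫ y, φ y • g (x + y)‖ + (∫ y, ‖Ψ y‖) * S := by
  have hdiff : ‖∫ y, φ y • (g (x + y) - g x)‖ ≤ (∫ y, ‖Ψ y‖) * S := by
    rw [h.integral_smul_sub_eq hg]
    refine (intervalIntegral.norm_integral_le_of_norm_le_const fun t ht ↦ ?_).trans_eq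
      (by rw [sub_zero, abs_one, mul_one])
    rw [uIoc_of_le zero_le_one] at ht
    rw [norm_smul, Real.norm_of_nonneg ht.1.le]
    exact (mul_le_of_le_one_left (norm_nonneg _) ht.2).trans
      (h.norm_integral_smul_laplacian_le hΨ hS ht.1.le ht.2)
  have hsplit : (∫ y, φ y) • g x = (∫ y, φ y • g (x + y)) - ∫ y, φ y • (g (x + y) - g x) := by
    have hint : ∀ u : E → F, Continuous u → Integrable fun y ↦ φ y • u y := fun u hu ↦
      (h.continuous_weight.smul hu).integrable_of_hasCompactSupport
        h.hasCompactSupport_weight.smul_right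
    have hgx : Continuous fun y ↦ g (x + y) := hg.continuous.comp (by fun_prop)
    simp_rw [smul_sub]
    rw [integral_sub (hint _ hgx) (hint _ continuous_const), sub_sub_cancel, integral_smul_const]
  rw [hsplit]
  exact (norm_sub_le _ _).trans (by gcongr)

end IsRadialPotential

end RadialPotential

section RadialBump

theorem deriv_expNegInvGlue (s : ℝ) : deriv expNegInvGlue s = s⁻¹ ^ 2 * expNegInvGlue s := by
  simpa using (expNegInvGlue.hasDerivAt_polynomial_eval_inv_mul 1 s).deriv

theorem deriv_expNegInvGlue_of_nonpos {s : ℝ} (hs : s ≤ 0) : deriv expNegInvGlue s = 0 := by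
  rw [deriv_expNegInvGlue, expNegInvGlue.zero_of_nonpos hs, mul_zero]

theorem contDiff_deriv_expNegInvGlue : ContDiff ℝ ∞ (deriv expNegInvGlue) :=
  (contDiff_infty_iff_deriv.1 expNegInvGlue.contDiff).2

variable {E : Type*} [NormedAddCommGroup E]

theorem tsupport_comp_sq_sub_norm_sq_subset {F : Type*} [Zero F] {h : ℝ → F}
    (hh : ∀ s ≤ 0, h s = 0) {R : ℝ} (hR : 0 ≤ R) :
    tsupport (fun y : E ↦ h (R ^ 2 - ‖y‖ ^ 2)) ⊆ closedBall 0 R := by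
  refine closure_minimal (fun y hy ↦ ?_) isClosed_closedBall
  rw [mem_closedBall_zero_iff]
  contrapose! hy
  have hlt : R ^ 2 < ‖y‖ ^ 2 := by gcongr
  exact Function.notMem_support.2 (hh _ (by linarith))

/-- The smooth bump `y ↦ exp(-1 / (R² - |y|²))`, extended by zero outside the ball of radius `R`;
it serves as the potential in `IsRadialPotential`. -/
noncomputable def radialBump (R : ℝ) (y : E) : ℝ := expNegInvGlue (R ^ 2 - ‖y‖ ^ 2)

/-- The weight `φ` with `∇(radialBump R)(y) = -φ(y) y`. -/
noncomputable def radialBumpWeight (R : ℝ) (y : E) : ℝ := 2 * deriv expNegInvGlue (R ^ 2 - ‖y‖ ^ 2)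

theorem tsupport_radialBump_subset {R : ℝ} (hR : 0 ≤ R) :
    tsupport (radialBump R : E → ℝ) ⊆ closedBall 0 R :=
  tsupport_comp_sq_sub_norm_sq_subset (fun _ ↦ expNegInvGlue.zero_of_nonpos) hR

theorem tsupport_radialBumpWeight_subset {R : ℝ} (hR : 0 ≤ R) :
    tsupport (radialBumpWeight R : E → ℝ) ⊆ closedBall 0 R :=
  tsupport_comp_sq_sub_norm_sq_subset (h := fun s ↦ 2 * deriv expNegInvGlue s)
    (fun s hs ↦ by rw [deriv_expNegInvGlue_of_nonpos hs, mul_zero]) hR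

variable [InnerProductSpace ℝ E]

theorem contDiff_radialBump (R : ℝ) : ContDiff ℝ ∞ (radialBump R : E → ℝ) :=
  expNegInvGlue.contDiff.comp (contDiff_const.sub (contDiff_norm_sq ℝ))

theorem contDiff_radialBumpWeight (R : ℝ) : ContDiff ℝ ∞ (radialBumpWeight R : E → ℝ) :=
  contDiff_const.mul
    (contDiff_deriv_expNegInvGlue.comp (contDiff_const.sub (contDiff_norm_sq ℝ)))

theorem fderiv_radialBump_apply (R : ℝ) (y v : E) :
    fderiv ℝ (radialBump R) y v = -(radialBumpWeight R y * ⟪y, v⟫_ℝ) := by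
  have hglue := (expNegInvGlue.contDiff (n := ⊤)).differentiable (by simp) (R ^ 2 - ‖y‖ ^ 2)
  have hnorm := (hasStrictFDerivAt_norm_sq y).hasFDerivAt.const_sub (R ^ 2)
  have hcomp : HasFDerivAt (radialBump R) _ y := hglue.hasDerivAt.comp_hasFDerivAt y hnorm
  rw [hcomp.fderiv, radialBumpWeight]
  simp only [smul_neg, neg_apply, smul_apply, coe_innerSL_apply, nsmul_eq_mul, Nat.cast_ofNat,
    smul_eq_mul, neg_inj]
  ring

variable [FiniteDimensional ℝ E]

theorem isRadialPotential_radialBump {R : ℝ} (hR : 0 ≤ R) :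
    IsRadialPotential (radialBumpWeight R : E → ℝ) (radialBump R) where
  continuous_weight := (contDiff_radialBumpWeight R).continuous
  hasCompactSupport_weight :=
    (isCompact_closedBall 0 R).of_isClosed_subset (isClosed_tsupport _)
      (tsupport_radialBumpWeight_subset hR)
  contDiff := (contDiff_radialBump R).of_le (by simp)
  hasCompactSupport :=
    (isCompact_closedBall 0 R).of_isClosed_subset (isClosed_tsupport _)
      (tsupport_radialBump_subset hR)
  fderiv_apply := fderiv_radialBump_apply R

theorem integral_radialBumpWeight_pos [MeasurableSpace E] [BorelSpace E] {R : ℝ} (hR : 0 < R) :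
    0 < ∫ y : E, radialBumpWeight R y := by
  refine (contDiff_radialBumpWeight R).continuous.integral_pos_of_hasCompactSupport_nonneg_nonzero
    (x := 0) (isRadialPotential_radialBump hR.le).hasCompactSupport_weight (fun y ↦ ?_) ?_
  · have := expNegInvGlue.nonneg (R ^ 2 - ‖y‖ ^ 2)
    rw [radialBumpWeight, deriv_expNegInvGlue]
    positivity
  · have := expNegInvGlue.pos_of_pos (pow_pos hR 2)
    rw [radialBumpWeight, deriv_expNegInvGlue, norm_zero, zero_pow two_ne_zero, sub_zero]
    positivity

end RadialBump

section PartialDerivatives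

variable {f g : ℂ → ℂ}

theorem pd_one_pdi (f : ℂ → ℂ) (a b : ℕ) : pd 1 (pdi a b f) = pdi (a + 1) b f :=
  (Function.iterate_succ_apply' ..).symm

theorem pdi_induction {P : ((ℂ → ℂ) → ℂ → ℂ) → Prop} (hid : P id)
    (hpd : ∀ v T, P T → P fun f ↦ pd v (T f)) (a b : ℕ) : P (pdi a b) := by
  induction a with
  | zero =>
    induction b with
    | zero => exact hid
    | succ b ih =>
      have hb : (fun f ↦ pd I (pdi 0 b f)) = pdi 0 (b + 1) :=
        funext fun f ↦ (Function.iterate_succ_apply' (pd I) b f).symm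
      exact hb ▸ hpd I _ ih
  | succ a ih => exact funext (pd_one_pdi · a b) ▸ hpd 1 _ ih

theorem contDiff_pd (hf : ContDiff ℝ ∞ f) (v : ℂ) : ContDiff ℝ ∞ (pd v f) :=
  (hf.fderiv_right (by simp)).clm_apply contDiff_const

theorem contDiff_pdi (hf : ContDiff ℝ ∞ f) (a b : ℕ) : ContDiff ℝ ∞ (pdi a b f) :=
  pdi_induction (P := fun T ↦ ContDiff ℝ ∞ (T f)) hf (fun v _ hT ↦ contDiff_pd hT v) a b

theorem contDiff_lap (hf : ContDiff ℝ ∞ f) : ContDiff ℝ ∞ (lap f) :=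
  (contDiff_pdi hf 2 0).add (contDiff_pdi hf 0 2)

theorem pd_pd_apply (hf : ContDiff ℝ ∞ f) (v w z : ℂ) :
    pd v (pd w f) z = fderiv ℝ (fderiv ℝ f) z v w := by
  have hd : DifferentiableAt ℝ (fderiv ℝ f) z :=
    (hf.fderiv_right (m := ∞) (by simp)).differentiable (by simp) z
  unfold pd
  rw [fderiv_clm_apply hd (differentiableAt_const w)]
  simp

theorem pd_comm (hf : ContDiff ℝ ∞ f) (v w : ℂ) : pd v (pd w f) = pd w (pd v f) := by
  funext z
  rw [pd_pd_apply hf, pd_pd_apply hf]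
  exact (contDiff_infty.1 hf 2).contDiffAt.isSymmSndFDerivAt (by simp) v w

theorem lap_pd (hf : ContDiff ℝ ∞ f) (v : ℂ) : lap (pd v f) = pd v (lap f) := by
  have hsum : pd v (lap f) = fun z ↦ pd v (pd 1 (pd 1 f)) z + pd v (pd I (pd I f)) z := by
    funext z
    exact congrArg (· v) (fderiv_fun_add
      ((contDiff_pdi hf 2 0).differentiable (by simp) z)
      ((contDiff_pdi hf 0 2).differentiable (by simp) z))
  rw [hsum, pd_comm (contDiff_pd hf 1), pd_comm hf v, pd_comm (contDiff_pd hf I), pd_comm hf v]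
  rfl

theorem map_pdi {S : (ℂ → ℂ) → ℂ → ℂ} (hS : ∀ v f, ContDiff ℝ ∞ f → S (pd v f) = pd v (S f))
    (hf : ContDiff ℝ ∞ f) (a b : ℕ) : S (pdi a b f) = pdi a b (S f) :=
  (pdi_induction (P := fun T ↦ ContDiff ℝ ∞ (T f) ∧ S (T f) = T (S f)) ⟨hf, rfl⟩
    (fun v T hT ↦ ⟨contDiff_pd hT.1 v, by rw [hS v _ hT.1, hT.2]⟩) a b).2

theorem lap_pdi (hf : ContDiff ℝ ∞ f) (a b : ℕ) : lap (pdi a b f) = pdi a b (lap f) :=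
  map_pdi (fun v _ hf ↦ lap_pd hf v) hf a b

theorem pdi_comp_add_left (hf : ContDiff ℝ ∞ f) (a b : ℕ) (x y : ℂ) :
    pdi a b f (x + y) = pdi a b (fun y ↦ f (x + y)) y :=
  congrFun (map_pdi (S := fun f y ↦ f (x + y))
    (fun v f _ ↦ funext fun y ↦ by rw [pd, pd, fderiv_comp_add_left]) hf a b) y

theorem pd_I_pdi (hf : ContDiff ℝ ∞ f) (a b : ℕ) : pd I (pdi a b f) = pdi a (b + 1) f :=
  map_pdi (fun v _ hf ↦ pd_comm hf I v) hf a b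

theorem pdi_pdi (hf : ContDiff ℝ ∞ f) (i j a b : ℕ) :
    pdi i j (pdi a b f) = pdi (i + a) (j + b) f := by
  induction i with
  | zero =>
    induction j with
    | zero => rw [zero_add, zero_add]; rfl
    | succ j ih => rw [← pd_I_pdi (contDiff_pdi hf a b), ih, pd_I_pdi hf, Nat.add_right_comm]
  | succ i ih => rw [← pd_one_pdi, ih, pd_one_pdi, Nat.add_right_comm]

theorem lap_eq_laplacian (hf : ContDiff ℝ ∞ f) : lap f = Δ f := by
  funext z
  rw [InnerProductSpace.laplacian_eq_iteratedFDeriv_complexPlane]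
  simp only [iteratedFDeriv_two_apply]
  exact congrArg₂ (· + ·) (pd_pd_apply hf 1 1 z) (pd_pd_apply hf I I z)

theorem pd_eventuallyEq {z : ℂ} (h : f =ᶠ[𝓝 z] g) (v : ℂ) : pd v f =ᶠ[𝓝 z] pd v g :=
  h.fderiv.mono fun y hy ↦ by rw [pd, pd, hy]

theorem pdi_eventuallyEq {z : ℂ} (h : f =ᶠ[𝓝 z] g) (a b : ℕ) : pdi a b f =ᶠ[𝓝 z] pdi a b g :=
  pdi_induction (P := fun T ↦ T f =ᶠ[𝓝 z] T g) h (fun v _ hT ↦ pd_eventuallyEq hT v) a b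

theorem lap_eventuallyEq {z : ℂ} (h : f =ᶠ[𝓝 z] g) : lap f =ᶠ[𝓝 z] lap g :=
  (pdi_eventuallyEq h 2 0).add (pdi_eventuallyEq h 0 2)

theorem exists_integral_smul_pdi_eq {φ : ℂ → ℝ} (hφ : ContDiff ℝ ∞ φ) (hc : HasCompactSupport φ)
    (a b : ℕ) :
    ∃ ψ : ℂ → ℝ, Continuous ψ ∧ tsupport ψ ⊆ tsupport φ ∧
      ∀ f : ℂ → ℂ, ContDiff ℝ ∞ f → ∫ y, φ y • pdi a b f y = ∫ y, ψ y • f y := by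
  refine (pdi_induction (P := fun T ↦ (∀ f, ContDiff ℝ ∞ f → ContDiff ℝ ∞ (T f)) ∧
    ∀ φ : ℂ → ℝ, ContDiff ℝ ∞ φ → HasCompactSupport φ →
      ∃ ψ : ℂ → ℝ, Continuous ψ ∧ tsupport ψ ⊆ tsupport φ ∧
        ∀ f : ℂ → ℂ, ContDiff ℝ ∞ f → ∫ y, φ y • T f y = ∫ y, ψ y • f y)
    ⟨fun _ ↦ id, fun φ hφ _ ↦ ⟨φ, hφ.continuous, subset_rfl, fun _ _ ↦ rfl⟩⟩ ?_ a b).2 φ hφ hc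
  rintro v T ⟨hT, ih⟩
  refine ⟨fun f hf ↦ contDiff_pd (hT f hf) v, fun φ hφ hc ↦ ?_⟩
  have hφ' : ContDiff ℝ ∞ fun y ↦ -fderiv ℝ φ y v :=
    ((hφ.fderiv_right (by simp)).clm_apply contDiff_const).neg
  obtain ⟨ψ, hψ, hsupp, hψT⟩ := ih _ hφ' (hc.fderiv_apply ℝ v).neg
  refine ⟨ψ, hψ, hsupp.trans ?_, fun f hf ↦ ?_⟩
  · exact (tsupport_neg _).subset.trans (tsupport_fderiv_apply_subset ℝ v)
  · rw [← hψT f hf]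
    simp_rw [neg_smul, integral_neg]
    exact integral_smul_fderiv_eq_neg_of_hasCompactSupport (hφ.of_le (by simp)) hc
      ((hT f hf).of_le (by simp)) v

end PartialDerivatives

section Interior

theorem norm_integral_smul_comp_add_left_le {E F : Type*} [NormedAddCommGroup E]
    [ProperSpace E] [MeasurableSpace E] [BorelSpace E] {μ : Measure E}
    [μ.IsAddLeftInvariant] [IsFiniteMeasureOnCompacts μ] [NormedAddCommGroup F] [NormedSpace ℝ F]
    {ψ : E → ℝ} {R K : ℝ} (hψ : tsupport ψ ⊆ closedBall 0 R) (hK : ∀ y, ‖ψ y‖ ≤ K) {f : E → F}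
    (hf : Continuous f) (x : E) :
    ‖∫ y, ψ y • f (x + y) ∂μ‖ ≤ K * ∫ z in closedBall x R, ‖f z‖ ∂μ := by
  have hzero : ∀ z ∉ closedBall x R, ψ (z - x) • f z = 0 := fun z hz ↦ by
    rw [image_eq_zero_of_notMem_tsupport (f := ψ) fun h ↦ hz ?_, zero_smul]
    simpa [dist_eq_norm] using hψ h
  have hshift : ∫ y, ψ y • f (x + y) ∂μ = ∫ z in closedBall x R, ψ (z - x) • f z ∂μ := by
    rw [setIntegral_eq_integral_of_forall_compl_eq_zero hzero,
      ← integral_add_left_eq_self (fun z ↦ ψ (z - x) • f z) x]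
    simp_rw [add_sub_cancel_left]
  rw [hshift, ← integral_const_mul]
  refine norm_integral_le_of_norm_le
    ((hf.norm.const_mul K).continuousOn.integrableOn_compact (isCompact_closedBall x R))
    (Eventually.of_forall fun z ↦ ?_)
  rw [norm_smul]
  gcongr
  exact hK _

theorem exists_norm_pdi_le_integral_norm {R : ℝ} (hR : 0 < R) (a b : ℕ) :
    ∃ C, 0 < C ∧ ∀ f : ℂ → ℂ, ContDiff ℝ ∞ f → ∀ x S,
      (∀ z ∈ closedBall x R, ‖pdi a b (lap f) z‖ ≤ S) →
        ‖pdi a b f x‖ ≤ C * ((∫ z in closedBall x R, ‖f z‖) + S) := by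
  have hpot := isRadialPotential_radialBump (E := ℂ) hR.le
  obtain ⟨ψ, hψ, hψφ, hψf⟩ := exists_integral_smul_pdi_eq (contDiff_radialBumpWeight R)
    hpot.hasCompactSupport_weight a b
  obtain ⟨K, hK⟩ := hψ.bounded_above_of_compact_support
    (hpot.hasCompactSupport_weight.mono' (subset_tsupport ψ |>.trans hψφ))
  have hψR := hψφ.trans (tsupport_radialBumpWeight_subset hR.le)
  have hK0 : 0 ≤ K := (norm_nonneg _).trans (hK 0)
  set c := ∫ y : ℂ, radialBumpWeight R y
  have hc : 0 < c := integral_radialBumpWeight_pos hR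
  set N := ∫ y : ℂ, ‖radialBump R y‖
  have hN : 0 ≤ N := integral_nonneg fun _ ↦ norm_nonneg _
  refine ⟨(K + N + 1) / c, by positivity, fun f hf x S hS ↦ ?_⟩
  have hS0 : 0 ≤ S := (norm_nonneg _).trans (hS x (mem_closedBall_self hR.le))
  have hA0 : 0 ≤ ∫ z in closedBall x R, ‖f z‖ := integral_nonneg fun _ ↦ norm_nonneg _
  have hmean : c * ‖pdi a b f x‖ ≤ K * (∫ z in closedBall x R, ‖f z‖) + N * S := by
    have hlap : ∀ z ∈ closedBall x R, ‖Δ (pdi a b f) z‖ ≤ S := by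
      rwa [← lap_eq_laplacian (contDiff_pdi hf a b), lap_pdi hf]
    have h := hpot.norm_integral_weight_smul_le (tsupport_radialBump_subset hR.le)
      (contDiff_infty.1 (contDiff_pdi hf a b) 2) hlap
    have hshift : ContDiff ℝ ∞ fun y ↦ f (x + y) := hf.comp (contDiff_const.add contDiff_id)
    simp_rw [pdi_comp_add_left hf] at h
    rw [hψf _ hshift, norm_smul, Real.norm_of_nonneg hc.le] at h
    exact h.trans (by gcongr; exact norm_integral_smul_comp_add_left_le hψR hK hf.continuous x)
  rw [div_mul_eq_mul_div, le_div_iff₀' hc]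
  nlinarith [mul_nonneg hK0 hS0, mul_nonneg hN hA0]

end Interior

section Sobolev

theorem norm_le_integral_norm_add_integral_norm_deriv {E : Type*} [NormedAddCommGroup E]
    [NormedSpace ℝ E] [CompleteSpace E] {h h' : ℝ → E} {a b x : ℝ} (hab : a < b)
    (hd : ∀ t ∈ Icc a b, HasDerivAt h (h' t) t) (hint : IntervalIntegrable h' volume a b)
    (hx : x ∈ Icc a b) :
    ‖h x‖ ≤ (b - a)⁻¹ * (∫ t in a..b, ‖h t‖) + ∫ t in a..b, ‖h' t‖ := by
  rw [← uIcc_of_le hab.le] at hd hx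
  have hpoint : ∀ t ∈ uIcc a b, ‖h x‖ - (∫ s in a..b, ‖h' s‖) ≤ ‖h t‖ := fun t ht ↦ by
    have hsub : h x - h t = ∫ s in t..x, h' s :=
      (intervalIntegral.integral_eq_sub_of_hasDerivAt
        (fun s hs ↦ hd s (uIcc_subset_uIcc ht hx hs))
        (hint.mono_set (uIcc_subset_uIcc ht hx))).symm
    have hle : ‖h x - h t‖ ≤ ∫ s in a..b, ‖h' s‖ := by
      rw [hsub, intervalIntegral.integral_of_le hab.le, ← uIoc_of_le hab.le]
      exact intervalIntegral.norm_integral_le_integral_norm_uIoc.trans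
        (setIntegral_mono_set hint.def'.norm (Eventually.of_forall fun _ ↦ norm_nonneg _)
          (uIoc_subset_uIoc_of_uIcc_subset_uIcc (uIcc_subset_uIcc ht hx)).eventuallyLE)
    linarith [norm_sub_norm_le (h x) (h t)]
  have hcont : ContinuousOn h (uIcc a b) := fun t ht ↦ (hd t ht).continuousAt.continuousWithinAt
  have hmean := intervalIntegral.integral_mono_on (μ := volume) hab.le intervalIntegrable_const
    hcont.norm.intervalIntegrable fun t ht ↦ hpoint t (Icc_subset_uIcc ht)
  rw [intervalIntegral.integral_const, smul_eq_mul, ← le_inv_mul_iff₀ (sub_pos.2 hab)] at hmean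
  exact sub_le_iff_le_add.1 hmean

variable {F : Type*} [NormedAddCommGroup F] [NormedSpace ℝ F]

theorem setIntegral_reProdIm {s t : Set ℝ} {H : ℂ → F} (hH : IntegrableOn H (s ×ℂ t)) :
    ∫ z in s ×ℂ t, H z = ∫ x in s, ∫ y in t, H (x + y * I) := by
  have hpre : s ×ℂ t = Complex.measurableEquivRealProd ⁻¹' (s ×ˢ t) := rfl
  have hemb := Complex.measurableEquivRealProd.measurableEmbedding
  have hH' : IntegrableOn (fun p : ℝ × ℝ ↦ H (p.1 + p.2 * I)) (s ×ˢ t) := by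
    rw [← Complex.volume_preserving_equiv_real_prod.integrableOn_comp_preimage hemb]
    simpa [Function.comp_def, Complex.re_add_im, ← hpre] using hH
  rw [Measure.volume_eq_prod] at hH'
  rw [← setIntegral_prod _ hH', ← Measure.volume_eq_prod, hpre,
    ← Complex.volume_preserving_equiv_real_prod.setIntegral_preimage_emb hemb]
  simp [Complex.re_add_im]

theorem setIntegral_Icc_reProdIm_Icc {a b c d : ℝ} (hab : a ≤ b) (hcd : c ≤ d) {H : ℂ → F}
    (hH : Continuous H) :
    ∫ z in Icc a b ×ℂ Icc c d, H z = ∫ s in a..b, ∫ t in c..d, H (s + t * I) := by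
  rw [setIntegral_reProdIm
    (hH.continuousOn.integrableOn_compact (isCompact_Icc.reProdIm isCompact_Icc)),
    intervalIntegral.integral_of_le hab, integral_Icc_eq_integral_Ioc]
  simp_rw [intervalIntegral.integral_of_le hcd, integral_Icc_eq_integral_Ioc]

variable {g : ℂ → ℂ}

theorem hasDerivAt_comp_ofReal_mul_I (hg : ContDiff ℝ ∞ g) (s t : ℝ) :
    HasDerivAt (fun t : ℝ ↦ g (s + t * I)) (pd I g (s + t * I)) t := by
  have hline : HasDerivAt (fun t : ℝ ↦ (s + t * I : ℂ)) I t := by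
    simpa using ((hasDerivAt_id t).ofReal_comp.mul_const I).const_add (s : ℂ)
  exact (hg.differentiable (by simp) _).hasFDerivAt.comp_hasDerivAt t hline

theorem hasDerivAt_comp_ofReal (hg : ContDiff ℝ ∞ g) (s t : ℝ) :
    HasDerivAt (fun s : ℝ ↦ g (s + t * I)) (pd 1 g (s + t * I)) s := by
  have hline : HasDerivAt (fun s : ℝ ↦ (s + t * I : ℂ)) 1 s := by
    simpa using (hasDerivAt_id s).ofReal_comp.add_const (t * I : ℂ)
  exact (hg.differentiable (by simp) _).hasFDerivAt.comp_hasDerivAt s hline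

theorem integral_norm_slice_le (hg : ContDiff ℝ ∞ g) {a b c d t : ℝ} (hab : a ≤ b) (hcd : c < d)
    (ht : t ∈ Icc c d) :
    ∫ s in a..b, ‖g (s + t * I)‖ ≤ (d - c)⁻¹ * (∫ z in Icc a b ×ℂ Icc c d, ‖g z‖) +
      ∫ z in Icc a b ×ℂ Icc c d, ‖pd I g z‖ := by
  have hgI := (contDiff_pd hg I).continuous
  have hslice : ∀ u : ℂ → ℂ, Continuous u →
      IntervalIntegrable (fun s : ℝ ↦ ∫ t in c..d, ‖u (s + t * I)‖) volume a b := fun u hu ↦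
    (intervalIntegral.continuous_parametric_intervalIntegral_of_continuous'
      (by fun_prop) c d).intervalIntegrable a b
  rw [setIntegral_Icc_reProdIm_Icc hab hcd.le hg.continuous.norm,
    setIntegral_Icc_reProdIm_Icc hab hcd.le hgI.norm, ← intervalIntegral.integral_const_mul,
    ← intervalIntegral.integral_add ((hslice g hg.continuous).const_mul _) (hslice _ hgI)]
  refine intervalIntegral.integral_mono_on hab
    (Continuous.intervalIntegrable (by fun_prop) a b)
    (((hslice g hg.continuous).const_mul _).add (hslice _ hgI)) fun s _ ↦ ?_
  exact norm_le_integral_norm_add_integral_norm_deriv hcd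
    (fun t _ ↦ hasDerivAt_comp_ofReal_mul_I hg s t)
    (Continuous.intervalIntegrable (by fun_prop) c d) ht

theorem norm_le_of_integral_norm_pdi_le (hg : ContDiff ℝ ∞ g) {a b c d : ℝ} (hab : a < b)
    (hcd : c < d) {B : ℝ}
    (hB : ∀ i ≤ 1, ∀ j ≤ 1, ∫ z in Icc a b ×ℂ Icc c d, ‖pdi i j g z‖ ≤ B) {z : ℂ}
    (hz : z ∈ Icc a b ×ℂ Icc c d) :
    ‖g z‖ ≤ ((b - a)⁻¹ + 1) * ((d - c)⁻¹ + 1) * B := by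
  obtain ⟨hre, him⟩ := mem_reProdIm.1 hz
  have : 0 < b - a := sub_pos.2 hab
  have : 0 < d - c := sub_pos.2 hcd
  have hslice : ∀ i ≤ 1, ∫ s in a..b, ‖pdi i 0 g (s + z.im * I)‖ ≤ (d - c)⁻¹ * B + B :=
    fun i hi ↦ by
      refine (integral_norm_slice_le (contDiff_pdi hg i 0) hab.le hcd him).trans ?_
      rw [pd_I_pdi hg]
      gcongr
      exacts [hB i hi 0 zero_le_one, hB i hi 1 le_rfl]
  have hline := norm_le_integral_norm_add_integral_norm_deriv hab
    (fun s _ ↦ hasDerivAt_comp_ofReal hg s z.im)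
    (((contDiff_pd hg 1).continuous.comp (by fun_prop)).intervalIntegrable a b) hre
  rw [re_add_im] at hline
  calc ‖g z‖ ≤ _ := hline
    _ ≤ (b - a)⁻¹ * ((d - c)⁻¹ * B + B) + ((d - c)⁻¹ * B + B) := by
        gcongr
        exacts [hslice 0 zero_le_one, hslice 1 le_rfl]
    _ = ((b - a)⁻¹ + 1) * ((d - c)⁻¹ + 1) * B := by ring

end Sobolev

section Holder

theorem integral_norm_le_measureReal_rpow_mul {X E : Type*} [MeasurableSpace X]
    [NormedAddCommGroup E] {μ : Measure X} [IsFiniteMeasure μ] {q : ℝ} (hq : 1 ≤ q) {f : X → E}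
    (hf : MemLp f (ENNReal.ofReal q) μ) :
    ∫ x, ‖f x‖ ∂μ ≤ μ.real univ ^ (1 - 1 / q) * (∫ x, ‖f x‖ ^ q ∂μ) ^ (1 / q) := by
  have hq0 : 0 < q := one_pos.trans_le hq
  have hexp : 0 ≤ 1 - 1 / q := sub_nonneg.2 (by rwa [div_le_one hq0])
  have hle := ENNReal.toReal_mono
    (ENNReal.mul_ne_top hf.2.ne (ENNReal.rpow_ne_top_of_nonneg
      (by simpa [ENNReal.toReal_ofReal hq0.le] using hexp) (measure_ne_top μ univ)))
    (eLpNorm_le_eLpNorm_mul_rpow_measure_univ (ENNReal.one_le_ofReal.2 hq) hf.1)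
  rw [ENNReal.toReal_mul, toReal_eLpNorm hf.1, toReal_eLpNorm hf.1,
    lpNorm_one_eq_integral_norm hf.1,
    lpNorm_eq_integral_norm_rpow_toReal (by simpa using hq0) ENNReal.ofReal_ne_top hf.1,
    ← ENNReal.toReal_rpow, ENNReal.toReal_ofReal hq0.le, ENNReal.toReal_one, div_one, mul_comm,
    ← one_div] at hle
  exact hle

theorem setIntegral_norm_le_measureReal_rpow_mul {X E : Type*} [TopologicalSpace X] [T2Space X]
    [MeasurableSpace X] [BorelSpace X] {μ : Measure X} [IsFiniteMeasureOnCompacts μ]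
    [NormedAddCommGroup E] {K : Set X} (hK : IsCompact K) {q : ℝ} (hq : 1 ≤ q) {f : X → E}
    (hf : ContinuousOn f K) :
    ∫ x in K, ‖f x‖ ∂μ ≤ μ.real K ^ (1 - 1 / q) * (∫ x in K, ‖f x‖ ^ q ∂μ) ^ (1 / q) := by
  have : IsFiniteMeasure (μ.restrict K) := ⟨by simpa using hK.measure_lt_top⟩
  obtain ⟨C, hC⟩ := hK.exists_bound_of_continuousOn hf
  have hLq : MemLp f (ENNReal.ofReal q) (μ.restrict K) :=
    .of_bound (hf.aestronglyMeasurable_of_isCompact hK hK.measurableSet) C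
      (ae_restrict_of_forall_mem hK.measurableSet hC)
  simpa only [measureReal_restrict_apply_univ] using integral_norm_le_measureReal_rpow_mul hq hLq

end Holder

section Extension

open scoped Manifold

theorem exists_contDiff_eventuallyEq_nhdsSet {E F : Type*} [NormedAddCommGroup E] [NormedSpace ℝ E]
    [FiniteDimensional ℝ E] [NormedAddCommGroup F] [NormedSpace ℝ F] {K U : Set E} {f : E → F}
    (hK : IsClosed K) (hU : IsOpen U) (hKU : K ⊆ U) {n : ℕ∞} (hf : ContDiffOn ℝ n f U) :
    ∃ g : E → F, ContDiff ℝ n g ∧ f =ᶠ[𝓝ˢ K] g := by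
  obtain ⟨V, hV, hKV, hVU⟩ := normal_exists_closure_subset hK hU hKU
  obtain ⟨χ, hχ1, hχ0, -⟩ := exists_contMDiffMap_one_nhds_of_subset_interior (n := n) 𝓘(ℝ, E) hK
    (hKV.trans_eq hV.interior_eq.symm)
  refine ⟨fun x ↦ χ x • f x, contDiff_iff_contDiffAt.2 fun x ↦ ?_,
    hχ1.mono fun x hx ↦ by simp [hx]⟩
  by_cases hx : x ∈ U
  · exact χ.contMDiff.contDiff.contDiffAt.smul (hf.contDiffAt (hU.mem_nhds hx))
  · have hzero : (fun x ↦ χ x • f x) =ᶠ[𝓝 x] fun _ ↦ 0 := by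
      filter_upwards [isClosed_closure.isOpen_compl.mem_nhds fun h ↦ hx (hVU h)] with y hy
      rw [hχ0 y fun h ↦ hy (subset_closure h), zero_smul]
    exact contDiffAt_const.congr_of_eventuallyEq hzero

end Extension

section Squares

theorem Qc_eq_reProdIm (r : ℝ) : Qc r = Icc (-r) r ×ℂ Icc (-r) r := by
  ext z
  simp only [Qc, mem_ofPred_eq, mem_reProdIm, mem_Icc, abs_le]

theorem isCompact_Qc (r : ℝ) : IsCompact (Qc r) :=
  Qc_eq_reProdIm r ▸ isCompact_Icc.reProdIm isCompact_Icc

theorem isOpen_Qo (r : ℝ) : IsOpen (Qo r) :=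
  (isOpen_lt continuous_re.abs continuous_const).inter
    (isOpen_lt continuous_im.abs continuous_const)

theorem Qc_subset_Qo {r s : ℝ} (h : r < s) : Qc r ⊆ Qo s :=
  fun _ hz ↦ ⟨hz.1.trans_lt h, hz.2.trans_lt h⟩

theorem closedBall_subset_Qc {r s : ℝ} {x : ℂ} (hx : x ∈ Qc r) : closedBall x (s - r) ⊆ Qc s := by
  intro z hz
  rw [mem_closedBall, dist_eq_norm] at hz
  have hre : |z.re| ≤ |x.re| + |(z - x).re| := by simpa using abs_add_le x.re (z - x).re
  have him : |z.im| ≤ |x.im| + |(z - x).im| := by simpa using abs_add_le x.im (z - x).im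
  constructor
  · linarith [hx.1, abs_re_le_norm (z - x)]
  · linarith [hx.2, abs_im_le_norm (z - x)]

end Squares

theorem exists_norm_pdi_le_integral_rpow {q : ℝ} (hq : 1 ≤ q) {r₀ r₁ : ℝ} (hr₁ : 0 < r₁)
    (h01 : r₀ < r₁) (a b : ℕ) :
    ∃ C, ∀ f : ℂ → ℂ, ContDiff ℝ ∞ f → ∀ A B : ℝ,
      (∫ z in Qc r₁, ‖f z‖ ^ q) ^ (1 / q) ≤ A →
      (∀ i ≤ 1, ∀ j ≤ 1, (∫ z in Qc r₁, ‖pdi (i + a) (j + b) (lap f) z‖ ^ q) ^ (1 / q) ≤ B) →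
      ∀ x ∈ Qc r₀, ‖pdi a b f x‖ ≤ C * (A + B) := by
  obtain ⟨C, hC, hpdi⟩ := exists_norm_pdi_le_integral_norm (sub_pos.2 h01) a b
  set V := volume.real (Qc r₁) ^ (1 - 1 / q)
  set D := ((r₁ - -r₁)⁻¹ + 1) * ((r₁ - -r₁)⁻¹ + 1)
  have hV : 0 ≤ V := by positivity
  have hD : 0 ≤ D := mul_self_nonneg _
  refine ⟨C * V * (1 + D), fun f hf A B hA hB x hx ↦ ?_⟩
  have hA0 : 0 ≤ A := le_trans (by positivity) hA
  have hB0 : 0 ≤ B := le_trans (by positivity) (hB 0 zero_le_one 0 zero_le_one)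
  have hholder : ∀ u : ℂ → ℂ, Continuous u → ∀ M : ℝ,
      (∫ z in Qc r₁, ‖u z‖ ^ q) ^ (1 / q) ≤ M → ∫ z in Qc r₁, ‖u z‖ ≤ V * M := fun u hu M hM ↦
    (setIntegral_norm_le_measureReal_rpow_mul (isCompact_Qc r₁) hq hu.continuousOn).trans
      (by gcongr)
  have hfA : ∫ z in closedBall x (r₁ - r₀), ‖f z‖ ≤ V * A :=
    (setIntegral_mono_set (hf.continuous.norm.continuousOn.integrableOn_compact (isCompact_Qc r₁))
      (Eventually.of_forall fun _ ↦ norm_nonneg _)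
      (closedBall_subset_Qc hx).eventuallyLE).trans (hholder f hf.continuous A hA)
  have hlap : ∀ z ∈ Qc r₁, ‖pdi a b (lap f) z‖ ≤ D * (V * B) := by
    have hsmooth := contDiff_pdi (contDiff_lap hf) a b
    rw [Qc_eq_reProdIm]
    refine fun z ↦ norm_le_of_integral_norm_pdi_le hsmooth (by linarith) (by linarith) ?_
    intro i hi j hj
    refine Qc_eq_reProdIm r₁ ▸ hholder _ (contDiff_pdi hsmooth i j).continuous B ?_
    rw [pdi_pdi (contDiff_lap hf)]
    exact hB i hi j hj
  calc ‖pdi a b f x‖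
      ≤ C * ((∫ z in closedBall x (r₁ - r₀), ‖f z‖) + D * (V * B)) :=
        hpdi f hf x _ fun z hz ↦ hlap z (closedBall_subset_Qc hx hz)
    _ ≤ C * (V * A + D * (V * B)) := by gcongr
    _ ≤ C * V * (1 + D) * (A + B) := by
        nlinarith [mul_nonneg (mul_nonneg hC.le hV) (add_nonneg hB0 (mul_nonneg hD hA0))]

theorem stmt16_general {q : ℝ} (hq : 1 ≤ q) {r₀ r₁ r₂ : ℝ} (hr₁ : 0 < r₁) (h01 : r₀ < r₁)
    (h12 : r₁ < r₂) (m : ℕ) :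
    ∃ C : ℝ, 0 < C ∧ ∀ f : ℂ → ℂ, ContDiffOn ℝ ∞ f (Qo r₂) → ∀ A B : ℝ,
      (∫ z in Qc r₁, ‖f z‖ ^ q) ^ (1 / q) ≤ A →
      (∀ a b : ℕ, a + b ≤ m + 2 → (∫ z in Qc r₁, ‖pdi a b (lap f) z‖ ^ q) ^ (1 / q) ≤ B) →
      ∀ a b : ℕ, a + b ≤ m → ∀ x ∈ Qc r₀, ‖pdi a b f x‖ ≤ C * (A + B) := by
  choose C hpdi using exists_norm_pdi_le_integral_rpow hq hr₁ h01
  obtain ⟨M, hM⟩ := ((finite_Iic (m, m)).image fun p ↦ C p.1 p.2).bddAbove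
  refine ⟨max M 1, by positivity, fun f hf A B hA hB a b hab x hx ↦ ?_⟩
  obtain ⟨g, hg, hfg⟩ := exists_contDiff_eventuallyEq_nhdsSet (isCompact_Qc r₁).isClosed
    (isOpen_Qo r₂) (Qc_subset_Qo h12) hf
  replace hfg : ∀ z ∈ Qc r₁, f =ᶠ[𝓝 z] g := eventually_nhdsSet_iff_forall.1 hfg
  have hLq : ∀ {u v : ℂ → ℂ}, (∀ z ∈ Qc r₁, u =ᶠ[𝓝 z] v) →
      ∫ z in Qc r₁, ‖u z‖ ^ q = ∫ z in Qc r₁, ‖v z‖ ^ q := fun huv ↦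
    setIntegral_congr_fun (isCompact_Qc r₁).measurableSet
      fun z hz ↦ by simp only [(huv z hz).eq_of_nhds]
  have hA0 : 0 ≤ A := le_trans (by positivity) hA
  have hB0 : 0 ≤ B := le_trans (by positivity) (hB 0 0 (Nat.zero_le _))
  have hx₁ : x ∈ Qc r₁ := closedBall_subset_Qc hx (mem_closedBall_self (sub_pos.2 h01).le)
  have hmem : (a, b) ∈ Iic (m, m) := ⟨by omega, by omega⟩
  rw [(pdi_eventuallyEq (hfg x hx₁) a b).eq_of_nhds]
  rw [hLq hfg] at hA
  refine (hpdi a b g hg A B hA (fun i hi j hj ↦ ?_) x hx).trans ?_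
  · rw [← hLq fun z hz ↦ pdi_eventuallyEq (lap_eventuallyEq (hfg z hz)) _ _]
    exact hB _ _ (by omega)
  · gcongr
    exact (hM (mem_image_of_mem _ hmem)).trans (le_max_left M 1)

/-- local sup-norm estimate by `L^q`-norms via the Laplacian. For every `m` there
are `l ∈ ℕ` and `C > 0` such that for all `f ∈ C^∞(int Q_{r₂})` and `|α| ≤ m`,
`sup_{Q_{r₀}} |∂^α f| ≤ C (‖f‖_{L^q(Q_{r₁})} + sup_{|β| ≤ l} ‖∂^β Δ f‖_{L^q(Q_{r₁})})`
(with any upper bounds `A`, `B` of the two `L^q`-quantities). -/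
theorem stmt16 (q : ℕ) (hq : 1 ≤ q) (r₀ r₁ r₂ : ℝ)
    (h0 : 0 < r₀) (h01 : r₀ < r₁) (h12 : r₁ < r₂) (m : ℕ) :
    ∃ (l : ℕ) (C : ℝ), 0 < C ∧ ∀ f : ℂ → ℂ, ContDiffOn ℝ (⊤ : ℕ∞) f (Qo r₂) →
      ∀ A B : ℝ,
        (∫ z in Qc r₁, ‖f z‖ ^ (q : ℝ)) ^ (1 / (q : ℝ)) ≤ A →
        (∀ a b : ℕ, a + b ≤ l →
          (∫ z in Qc r₁, ‖pdi a b (lap f) z‖ ^ (q : ℝ)) ^ (1 / (q : ℝ)) ≤ B) →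
        ∀ a b : ℕ, a + b ≤ m → ∀ x ∈ Qc r₀, ‖pdi a b f x‖ ≤ C * (A + B) :=
  ⟨m + 2, stmt16_general (mod_cast hq) (h0.trans h01) h01 h12 m⟩
end
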